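/- arXiv:1703.09188 — 9 statements merged into one kernel-verified Lean document; each statement's English description precedes it below -/
import Mathlib

section
/- If an MPO tensor A generates an MPU (i.e., U^{(N)} is unitary for every N ≥ 2), then the characteristic polynomial of its transfer matrix E is X^{D²−1}(X−1); equivalently, 1 is an eigenvalue of E with algebraic multiplicity one and all other eigenvalues of E (with multiplicity) are zero. -/
/-!
Writing `|Tr(A^{i₁j₁} ⋯ A^{i_Nj_N})|²` as the trace of a product of the matrices
`A^{ij} ⊗ conj(A^{ij})` and summing over all indices gives
`Tr(E^N) = d^{-N} Tr(U^{(N)} U^{(N)†})`, so unitarity yields `Tr(E^N) = 1` for every `N ≥ 2`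
(`trace_transferMat_pow`).

The trace of a polynomial in a complex matrix is the sum of its values at the eigenvalues
(`trace_aeval_eq_sum_roots`). By linearity the eigenvalues `λ` of `E`, with multiplicity, satisfy
`∑ q(λ) = q(1)` for every polynomial `q` divisible by `X²`. Taking `q = X² p`, where `p` vanishes
at `1` and at all eigenvalues except a given `μ ≠ 0`, shows that `μ` has multiplicity one if
`μ = 1` and zero otherwise. The remaining eigenvalues are therefore zero.
-/


open scoped Kronecker Matrix
open Polynomial

/-- The matrix `U^{(N)}` generated by an MPO tensor `A`:
`U^{(N)}_{(i₁…i_N),(j₁…j_N)} = Tr(A^{i₁j₁} ⋯ A^{i_Nj_N})`. -/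
noncomputable def mpoU (d D : ℕ) (A : Fin d → Fin d → Matrix (Fin D) (Fin D) ℂ) (N : ℕ) :
    Matrix (Fin N → Fin d) (Fin N → Fin d) ℂ :=
  Matrix.of fun i j => ((List.ofFn fun k => A (i k) (j k)).prod).trace

/-- The transfer matrix `E = (1/d) Σ_{i,j} A^{ij} ⊗ conj(A^{ij})`. -/
noncomputable def transferMat (d D : ℕ) (A : Fin d → Fin d → Matrix (Fin D) (Fin D) ℂ) :
    Matrix (Fin D × Fin D) (Fin D × Fin D) ℂ :=
  ((d : ℂ))⁻¹ • ∑ i : Fin d, ∑ j : Fin d, (A i j) ⊗ₖ ((A i j).map (starRingEnd ℂ))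

/-! ### Traces of polynomials in a matrix -/

section Spectral

variable {n : Type*} [Fintype n] [DecidableEq n]

lemma det_sub_scalar_eq_prod_roots (M : Matrix n n ℂ) (r : ℂ) :
    (M - algebraMap ℂ (Matrix n n ℂ) r).det = (M.charpoly.roots.map fun l => l - r).prod := by
  have hs := IsAlgClosed.splits M.charpoly
  have h1 := M.eval_charpoly r
  rw [hs.eval_eq_prod_roots_of_monic M.charpoly_monic] at h1
  have h2 : M - algebraMap ℂ (Matrix n n ℂ) r = -(Matrix.scalar n r - M) := by
    rw [neg_sub]; rfl
  have hc : M.charpoly.roots.card = Fintype.card n := by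
    rw [← M.charpoly_natDegree_eq_dim, ← hs.natDegree_eq_card_roots]
  rw [h2, Matrix.det_neg, ← h1, ← hc]
  have h3 : (M.charpoly.roots.map fun l => l - r)
      = (M.charpoly.roots.map fun l => r - l).map Neg.neg := by
    simp
  rw [h3, Multiset.prod_map_neg, Multiset.card_map]

/-- The determinant of `p(M)` is the product of the values of `p` at the eigenvalues of `M`:
both sides are multiplicative in `p`, and `p` splits into linear factors. -/
lemma det_aeval_eq_prod_roots (M : Matrix n n ℂ) (p : ℂ[X]) :
    (aeval M p).det = (M.charpoly.roots.map fun l => p.eval l).prod := by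
  have hc : M.charpoly.roots.card = Fintype.card n := by
    rw [← M.charpoly_natDegree_eq_dim, ← (IsAlgClosed.splits M.charpoly).natDegree_eq_card_roots]
  have key : ∀ s : Multiset ℂ, (aeval M (s.map fun r => X - C r).prod).det
      = (M.charpoly.roots.map fun l => ((s.map fun r => X - C r).prod).eval l).prod := by
    intro s
    induction s using Multiset.induction_on with
    | empty => simp
    | cons a s ih =>
      simp only [Multiset.map_cons, Multiset.prod_cons, map_mul, Matrix.det_mul, ih, eval_mul,
        Multiset.prod_map_mul]
      congr 1
      simpa using det_sub_scalar_eq_prod_roots M a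
  have hp := (IsAlgClosed.splits p).eq_prod_roots
  rw [hp]
  simp only [map_mul, Matrix.det_mul, key, eval_mul, Multiset.prod_map_mul]
  congr 1
  simp [Matrix.algebraMap_eq_diagonal, hc]

lemma roots_charpoly_aeval (M : Matrix n n ℂ) (p : ℂ[X]) :
    (aeval M p).charpoly.roots = M.charpoly.roots.map fun l => p.eval l := by
  have h : (aeval M p).charpoly
      = ((M.charpoly.roots.map fun l => p.eval l).map fun a => X - C a).prod := by
    refine Polynomial.funext fun r => ?_
    rw [Matrix.eval_charpoly]
    have : Matrix.scalar n r - aeval M p = aeval M (C r - p) := by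
      simp; rfl
    rw [this, det_aeval_eq_prod_roots, eval_multiset_prod]
    simp
  rw [h, roots_multiset_prod_X_sub_C]

/-- The trace of `p(M)` is the sum of the values of `p` at the eigenvalues of `M`. -/
lemma trace_aeval_eq_sum_roots (M : Matrix n n ℂ) (p : ℂ[X]) :
    (aeval M p).trace = (M.charpoly.roots.map fun l => p.eval l).sum := by
  rw [Matrix.trace_eq_sum_roots_charpoly, roots_charpoly_aeval]

/-- Multiplicity of a nonzero eigenvalue, from the traces of all powers `N ≥ 2`. -/
lemma count_roots_of_trace_pow (M : Matrix n n ℂ) (h : ∀ N, 2 ≤ N → (M ^ N).trace = 1)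
    (m : ℂ) (hm : m ≠ 0) : M.charpoly.roots.count m = if m = 1 then 1 else 0 := by
  have htr : ∀ p : ℂ[X], (aeval M (X ^ 2 * p)).trace = p.eval 1 := by
    intro p
    induction p using Polynomial.induction_on' with
    | add p q hp hq => rw [mul_add, map_add, Matrix.trace_add, hp, hq, eval_add]
    | monomial k a =>
      have : (X : ℂ[X]) ^ 2 * monomial k a = C a * X ^ (k + 2) := by
        rw [← C_mul_X_pow_eq_monomial]; ring
      rw [this, map_mul, aeval_C, map_pow, aeval_X, ← Algebra.smul_def, Matrix.trace_smul,
        h _ (by lia)]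
      simp
  set R := M.charpoly.roots with hR
  -- `p` vanishes at `1` and at every eigenvalue, except at `m`
  set p : ℂ[X] := ∏ r ∈ (insert 1 R.toFinset).erase m, (X - C r) with hp
  have hpm : p.eval m ≠ 0 := by
    rw [hp, eval_prod, Finset.prod_ne_zero_iff]
    intro r hr
    simpa [sub_eq_zero] using (Finset.ne_of_mem_erase hr).symm
  have hp0 : ∀ r ∈ insert 1 R.toFinset, r ≠ m → p.eval r = 0 := by
    intro r hr hrm
    rw [hp, eval_prod]
    exact Finset.prod_eq_zero (Finset.mem_erase.2 ⟨hrm, hr⟩) (by simp)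
  have h1 := htr p
  rw [trace_aeval_eq_sum_roots, ← hR, Finset.sum_multiset_map_count] at h1
  have h2 : ∑ r ∈ R.toFinset, R.count r • eval r (X ^ 2 * p) = R.count m • eval m (X ^ 2 * p) := by
    refine Finset.sum_eq_single m (fun r hr hrm => ?_) (fun hmn => ?_)
    · simp [hp0 r (Finset.mem_insert_of_mem hr) hrm]
    · rw [Multiset.count_eq_zero.2 (by simpa using hmn), zero_smul]
  rw [h2] at h1
  split_ifs with hm1
  · subst hm1
    have : ((R.count 1 : ℕ) : ℂ) = 1 := by
      apply mul_right_cancel₀ hpm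
      simpa using h1
    exact_mod_cast this
  · rw [hp0 1 (Finset.mem_insert_self _ _) (Ne.symm hm1)] at h1
    simpa [hm, hpm] using h1

lemma charpoly_of_trace_pow (M : Matrix n n ℂ) (h : ∀ N, 2 ≤ N → (M ^ N).trace = 1) :
    M.charpoly = X ^ (Fintype.card n - 1) * (X - 1) := by
  have hs := IsAlgClosed.splits M.charpoly
  have hc : M.charpoly.roots.card = Fintype.card n := by
    rw [← M.charpoly_natDegree_eq_dim, ← hs.natDegree_eq_card_roots]
  have hne : M.charpoly.roots.filter (fun r => ¬ r = 0) = {1} := by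
    ext m
    rw [Multiset.count_filter, Multiset.count_singleton]
    by_cases h1 : m = 0
    · simp [h1]
    · rw [if_pos h1, count_roots_of_trace_pow M h m h1]
  have hsplit := Multiset.filter_add_not (fun r : ℂ => r = 0) M.charpoly.roots
  rw [hne, Multiset.filter_eq'] at hsplit
  have hcard : M.charpoly.roots.count 0 = Fintype.card n - 1 := by
    rw [← hc]
    conv_rhs => rw [← hsplit]
    simp
  rw [hcard] at hsplit
  rw [hs.eq_prod_roots_of_monic M.charpoly_monic, ← hsplit]
  simp

end Spectral

/-! ### The trace of powers of the transfer matrix -/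

/-- Expansion of the power of a sum in a noncommutative semiring. -/
lemma sum_pow_eq_sum_prod_ofFn {ι R : Type*} [Fintype ι] [Semiring R] (f : ι → R) (N : ℕ) :
    (∑ a, f a) ^ N = ∑ x : Fin N → ι, (List.ofFn fun k => f (x k)).prod := by
  induction N with
  | zero => simp
  | succ N ih =>
    rw [pow_succ', ih, ← (Fin.consEquiv fun _ => ι).sum_comp, Fintype.sum_prod_type,
      Finset.sum_mul_sum]
    simp [List.ofFn_succ, Fin.consEquiv]

lemma prod_ofFn_kronecker {D N : ℕ} (B C : Fin N → Matrix (Fin D) (Fin D) ℂ) :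
    (List.ofFn fun k => B k ⊗ₖ C k).prod = (List.ofFn B).prod ⊗ₖ (List.ofFn C).prod := by
  induction N with
  | zero => simp
  | succ N ih =>
    simp only [List.ofFn_succ, List.prod_cons]
    rw [ih, Matrix.mul_kronecker_mul]

lemma trace_prod_kronecker_conj {D N : ℕ} (B : Fin N → Matrix (Fin D) (Fin D) ℂ) :
    (List.ofFn fun k => B k ⊗ₖ (B k).map (starRingEnd ℂ)).prod.trace
      = (List.ofFn B).prod.trace * star (List.ofFn B).prod.trace := by
  rw [prod_ofFn_kronecker, Matrix.trace_kronecker]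
  congr 1
  have h : (List.ofFn fun k => (B k).map (starRingEnd ℂ)).prod
      = (List.ofFn B).prod.map (starRingEnd ℂ) := by
    have := map_list_prod (starRingEnd ℂ).mapMatrix (List.ofFn B)
    rw [List.map_ofFn] at this
    exact this.symm
  rw [h]
  simp [Matrix.trace]

/-- `Tr(E^N) = d^{-N} Tr(U^{(N)} U^{(N)†}) = 1` whenever `U^{(N)}` is unitary. -/
lemma trace_transferMat_pow (d D : ℕ) (hd : 1 ≤ d)
    (A : Fin d → Fin d → Matrix (Fin D) (Fin D) ℂ) (N : ℕ)
    (hU : mpoU d D A N ∈ Matrix.unitaryGroup (Fin N → Fin d) ℂ) :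
    (transferMat d D A ^ N).trace = 1 := by
  have hU' := congrArg Matrix.trace (Matrix.mem_unitaryGroup_iff.1 hU)
  rw [Matrix.trace_one] at hU'
  have hd0 : (d : ℂ) ≠ 0 := by exact_mod_cast (by lia : d ≠ 0)
  have key : ((∑ a : Fin d × Fin d, A a.1 a.2 ⊗ₖ (A a.1 a.2).map (starRingEnd ℂ)) ^ N).trace
      = (mpoU d D A N * star (mpoU d D A N)).trace := by
    rw [sum_pow_eq_sum_prod_ofFn, Matrix.trace_sum,
      ← (Equiv.arrowProdEquivProdArrow (Fin N) (fun _ => Fin d) (fun _ => Fin d)).symm.sum_comp,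
      Fintype.sum_prod_type]
    simp only [Matrix.trace, Matrix.diag_apply, Matrix.mul_apply, Matrix.star_apply]
    refine Finset.sum_congr rfl fun i _ => Finset.sum_congr rfl fun j _ => ?_
    exact trace_prod_kronecker_conj fun k => A (i k) (j k)
  rw [transferMat, ← Fintype.sum_prod_type'
    (f := fun i j => A i j ⊗ₖ (A i j).map (starRingEnd ℂ)), _root_.smul_pow, Matrix.trace_smul, key, hU']
  simp [hd0]

/-- If an MPO tensor generates an MPU (i.e. `U^{(N)}` is unitary for all `N ≥ 2`), then the
characteristic polynomial of its transfer matrix is `X^{D²-1}(X-1)`: `1` is an eigenvalue of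
algebraic multiplicity one, and all other eigenvalues vanish. -/
theorem stmt0 (d D : ℕ) (hd : 1 ≤ d) (hD : 1 ≤ D)
    (A : Fin d → Fin d → Matrix (Fin D) (Fin D) ℂ)
    (hMPU : ∀ N : ℕ, 2 ≤ N → mpoU d D A N ∈ Matrix.unitaryGroup (Fin N → Fin d) ℂ) :
    (transferMat d D A).charpoly = X ^ (D ^ 2 - 1) * (X - 1) := by
  have h := charpoly_of_trace_pow (transferMat d D A) fun N hN =>
    trace_transferMat_pow d D hd A N (hMPU N hN)
  rw [h, Fintype.card_prod, Fintype.card_fin, sq]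
end

section
/- Let E be a complex D×D matrix such that Tr(E^N) = 1 for every integer N ≥ 2. Then the characteristic polynomial of E is X^{D−1}(X−1); in particular, 1 is an eigenvalue of E with algebraic multiplicity one and all other eigenvalues of E are zero. -/
/-!
Let `λ₁, …, λ_D` be the roots of the characteristic polynomial of `E`, with multiplicity.
Factoring `p` into linear factors gives `det p(E) = ∏ p(λᵢ)`; applied to `c - p` for every
scalar `c`, this shows that `p(E)` has characteristic polynomial `∏ (X - p(λᵢ))`, and hence
`Tr p(E) = ∑ p(λᵢ)` (`trace_aeval_eq_sum`).

The hypothesis says, by linearity, that `∑ q(λᵢ) = q(1)` for every multiple `q` of `X²`. Given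
`μ ≠ 0`, take for `q` the product of `X²` with the factors `X - ν`, where `ν ≠ μ` runs over `1`
and the roots: then only `μ` contributes, so the multiplicity of `μ` is `1` if `μ = 1` and `0`
otherwise. The remaining `D - 1` roots are therefore `0`.
-/

open Polynomial

/-- Both sides are multiplicative in `p`, and for linear `p` the claim is the factorization of
the characteristic polynomial. -/
lemma det_aeval_eq_prod {D : ℕ} (E : Matrix (Fin D) (Fin D) ℂ) (p : ℂ[X]) :
    (aeval E p).det = (E.charpoly.roots.map (fun l => p.eval l)).prod := by
  have hcard : E.charpoly.roots.card = D := by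
    rw [← (IsAlgClosed.splits E.charpoly).natDegree_eq_card_roots,
      Matrix.charpoly_natDegree_eq_dim, Fintype.card_fin]
  let F : ℂ[X] →* ℂ := Matrix.detMonoidHom.comp (aeval E : ℂ[X] →ₐ[ℂ] _).toMonoidHom
  let G : ℂ[X] →* ℂ :=
    { toFun := fun p => (E.charpoly.roots.map (fun l => p.eval l)).prod
      map_one' := by simp
      map_mul' := by intro p q; simp [Multiset.prod_map_mul] }
  change F p = G p
  have hC : ∀ a : ℂ, F (C a) = G (C a) := by
    intro a
    change (aeval E (C a)).det = (E.charpoly.roots.map (fun l => (C a).eval l)).prod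
    simp [Matrix.algebraMap_eq_diagonal, Matrix.det_diagonal, hcard]
  have hX : ∀ r : ℂ, F (C r - X) = G (C r - X) := by
    intro r
    change (aeval E (C r - X)).det = (E.charpoly.roots.map (fun l => (C r - X).eval l)).prod
    have h1 : E.charpoly.eval r = (E.charpoly.roots.map (fun l => r - l)).prod := by
      conv_lhs => rw [(IsAlgClosed.splits E.charpoly).eq_prod_roots_of_monic E.charpoly_monic]
      rw [eval_multiset_prod, Multiset.map_map]
      simp
    have h2 := Matrix.eval_charpoly E r
    rw [h1] at h2
    simp [h2, Matrix.algebraMap_eq_diagonal, Pi.algebraMap_def]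
  have hX' : ∀ r : ℂ, F (X - C r) = G (X - C r) := by
    intro r
    have : (X - C r : ℂ[X]) = C (-1) * (C r - X) := by simp
    rw [this, map_mul, map_mul, hC, hX]
  rw [(IsAlgClosed.splits p).eq_prod_roots, map_mul, map_mul, hC, map_multiset_prod,
    map_multiset_prod, Multiset.map_map, Multiset.map_map]
  simp only [Function.comp_def, hX']

lemma trace_aeval_eq_sum {D : ℕ} (E : Matrix (Fin D) (Fin D) ℂ) (p : ℂ[X]) :
    (aeval E p).trace = (E.charpoly.roots.map (fun l => p.eval l)).sum := by
  have key : (aeval E p).charpoly =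
      ((E.charpoly.roots.map (fun l => p.eval l)).map (fun a => X - C a)).prod := by
    apply Polynomial.funext
    intro c
    have := det_aeval_eq_prod E (C c - p)
    rw [Matrix.eval_charpoly, eval_multiset_prod, Multiset.map_map, Multiset.map_map]
    simp only [Function.comp_def, eval_sub, eval_X, eval_C] at this ⊢
    rw [← this]
    simp [Matrix.algebraMap_eq_diagonal, Pi.algebraMap_def]
  rw [Matrix.trace_eq_sum_roots_charpoly, key, roots_multiset_prod_X_sub_C]

lemma trace_aeval_X_sq_mul {D : ℕ} (E : Matrix (Fin D) (Fin D) ℂ)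
    (h : ∀ N : ℕ, 2 ≤ N → (E ^ N).trace = 1) (r : ℂ[X]) :
    (aeval E (X ^ 2 * r)).trace = r.eval 1 := by
  induction r using Polynomial.induction_on' with
  | add p q hp hq => rw [mul_add, map_add, Matrix.trace_add, hp, hq, eval_add]
  | monomial n a =>
    rw [← C_mul_X_pow_eq_monomial, mul_left_comm, ← pow_add, ← smul_eq_C_mul, map_smul,
      Matrix.trace_smul, map_pow, aeval_X, h _ (by omega)]
    simp

/-- A product of linear factors vanishing at all roots other than `μ`, and at `1` if `μ ≠ 1`,
isolates the multiplicity of `μ`. -/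
lemma count_roots_charpoly {D : ℕ} (E : Matrix (Fin D) (Fin D) ℂ)
    (h : ∀ N : ℕ, 2 ≤ N → (E ^ N).trace = 1) (μ : ℂ) (hμ : μ ≠ 0) :
    E.charpoly.roots.count μ = if μ = 1 then 1 else 0 := by
  classical
  set s := E.charpoly.roots with hs
  let r : ℂ[X] := ∏ ν ∈ (insert 1 s.toFinset).erase μ, (X - C ν)
  have hr : ∀ ν ∈ insert 1 s.toFinset, ν ≠ μ → r.eval ν = 0 := by
    intro ν hν hne
    rw [eval_prod]
    exact Finset.prod_eq_zero (Finset.mem_erase.2 ⟨hne, hν⟩) (by simp)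
  have hrμ : r.eval μ ≠ 0 := by
    rw [eval_prod, Finset.prod_ne_zero_iff]
    intro ν hν
    simpa [sub_eq_zero] using (Finset.ne_of_mem_erase hν).symm
  have h1 := trace_aeval_eq_sum E (X ^ 2 * r)
  rw [trace_aeval_X_sq_mul E h, ← hs, Finset.sum_multiset_map_count,
    Finset.sum_eq_single μ] at h1
  · simp only [eval_mul, eval_pow, eval_X, nsmul_eq_mul] at h1
    split_ifs with hm
    · subst hm
      have : ((s.count 1 : ℕ) : ℂ) = 1 := by
        apply mul_right_cancel₀ hrμ
        linear_combination -h1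
      exact_mod_cast this
    · rw [hr 1 (Finset.mem_insert_self _ _) (Ne.symm hm)] at h1
      have h2 : μ ^ 2 * r.eval μ ≠ 0 := mul_ne_zero (pow_ne_zero 2 hμ) hrμ
      exact_mod_cast (mul_eq_zero.1 h1.symm).resolve_right h2
  · intro ν hν hne
    simp [hr ν (Finset.mem_insert_of_mem hν) hne]
  · intro hν
    simp [Multiset.count_eq_zero.2 (fun hc => hν (Multiset.mem_toFinset.2 hc))]

/-- If `E` is a `D×D` complex matrix with `Tr(E^N) = 1` for every `N ≥ 2`, then its
characteristic polynomial is `X^{D-1}(X-1)`: `1` is an eigenvalue of algebraic multiplicity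
one and all other eigenvalues of `E` are zero. -/
theorem stmt1 (D : ℕ) (hD : 1 ≤ D) (E : Matrix (Fin D) (Fin D) ℂ)
    (h : ∀ N : ℕ, 2 ≤ N → (E ^ N).trace = 1) :
    E.charpoly = X ^ (D - 1) * (X - 1) := by
  classical
  have hcard : E.charpoly.roots.card = D := by
    rw [← (IsAlgClosed.splits E.charpoly).natDegree_eq_card_roots,
      Matrix.charpoly_natDegree_eq_dim, Fintype.card_fin]
  have hcount := count_roots_charpoly E h
  have h1 : (1 : ℂ) ∈ E.charpoly.roots := by
    rw [← Multiset.one_le_count_iff_mem, hcount 1 one_ne_zero, if_pos rfl]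
  obtain ⟨t, ht⟩ := Multiset.exists_cons_of_mem h1
  have ht0 : t = Multiset.replicate (D - 1) 0 := by
    rw [Multiset.eq_replicate]
    constructor
    · rw [ht, Multiset.card_cons] at hcard
      omega
    · intro μ hμt
      by_contra hμ
      have hc := hcount μ hμ
      have := Multiset.one_le_count_iff_mem.2 hμt
      rw [ht, Multiset.count_cons] at hc
      split_ifs at hc <;> omega
  rw [(IsAlgClosed.splits E.charpoly).eq_prod_roots_of_monic E.charpoly_monic, ht, ht0]
  simp [mul_comm]
end

section
/- Let S be a set of m×m complex matrices such that every finite product S₁S₂⋯S_k (k ≥ 1, each S_i ∈ S) has trace zero. Then every product of m elements of S is the zero matrix. -/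
/-! The span `A` of all nonempty products of elements of `S` is a non-unital algebra on which the
trace vanishes. Since `A` is closed under powers, every `a ∈ A` satisfies `tr (a ^ k) = 0` for all
`k ≥ 1`, hence is nilpotent (`isNilpotent_of_trace_pow`).

A non-unital algebra `A` of nilpotent operators on `V` satisfies `A ^ dim V = 0`
(`prod_eq_zero_of_forall_isNilpotent`): put `N 0 = 0` and `N (k + 1) = {v | A v ⊆ N k}`. By
`exists_notMem_forall_apply_mem` this chain grows strictly until it reaches `V`, so
`N (dim V) = V`, and a product of `dim V` elements of `A` maps `N (dim V)` into `N 0 = 0`. -/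

open Polynomial in
/-- Write the characteristic polynomial as `X ^ k * q` with `q 0 ≠ 0`. The projection onto the
summand on which `f` is invertible is a polynomial in `f` without constant term, so its trace is
zero; an idempotent of trace zero in characteristic zero vanishes, which leaves `f ^ k = 0`. -/
theorem isNilpotent_of_trace_pow {V : Type*} [AddCommGroup V] [Module ℂ V] [FiniteDimensional ℂ V]
    (f : Module.End ℂ V) (h : ∀ k, LinearMap.trace ℂ V (f ^ (k + 1)) = 0) : IsNilpotent f := by
  have h0 : LinearMap.charpoly f ≠ 0 := (LinearMap.charpoly_monic f).ne_zero
  obtain ⟨q, hq, hnd⟩ := Polynomial.exists_eq_pow_rootMultiplicity_mul_and_not_dvd _ h0 (0 : ℂ)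
  set k := rootMultiplicity 0 (LinearMap.charpoly f)
  rw [C_0, sub_zero] at hq hnd
  have hcop : IsCoprime (X ^ (k + 1) : ℂ[X]) q :=
    ((Polynomial.irreducible_X.coprime_iff_not_dvd).2 hnd).pow_left
  obtain ⟨u, v, huv⟩ := hcop
  have htr : ∀ p : ℂ[X], LinearMap.trace ℂ V (aeval f (p * X)) = 0 := by
    intro p
    induction p using Polynomial.induction_on' with
    | add p q hp hq => rw [add_mul, map_add, map_add, hp, hq, add_zero]
    | monomial n a =>
      rw [monomial_mul_X, aeval_monomial, ← Algebra.smul_def, map_smul, h, smul_zero]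
  have hch : aeval f (X ^ k * q) = 0 := hq ▸ LinearMap.aeval_self_charpoly f
  have hidem : IsIdempotentElem (aeval f (u * X ^ (k + 1))) := by
    have : u * X ^ (k + 1) * (u * X ^ (k + 1)) =
        u * X ^ (k + 1) - (X ^ k * q) * (X * u * v) := by
      linear_combination (u * X ^ (k + 1)) * huv
    rw [IsIdempotentElem, ← map_mul, this, map_sub, map_mul _ (X ^ k * q), hch, zero_mul, sub_zero]
  have hz : aeval f (u * X ^ (k + 1)) = 0 := by
    have h1 := htr (u * X ^ k)
    rw [mul_assoc, ← pow_succ] at h1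
    exact LinearMap.IsIdempotentElem.eq_zero_of_trace_eq_zero hidem h1
  refine ⟨k, ?_⟩
  have : X ^ k = X ^ k * (u * X ^ (k + 1)) + (X ^ k * q) * v := by
    linear_combination -X ^ k * huv
  rw [← aeval_X_pow (R := ℂ) f, this, map_add, map_mul, hz, map_mul, hch, mul_zero, zero_mul, add_zero]

/-- In other words, `A` annihilates some nonzero vector of `V ⧸ N`. Such a vector is found in a
minimal `A`-invariant subspace `U` strictly above `N`. -/
theorem exists_notMem_forall_apply_mem {V : Type*} [AddCommGroup V] [Module ℂ V] [FiniteDimensional ℂ V]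
    (A : NonUnitalSubalgebra ℂ (Module.End ℂ V)) (hA : ∀ a ∈ A, IsNilpotent a)
    (N : Submodule ℂ V) (hN : ∀ a ∈ A, ∀ v ∈ N, a v ∈ N) (hNt : N ≠ ⊤) :
    ∃ v ∉ N, ∀ a ∈ A, a v ∈ N := by
  obtain ⟨U, ⟨hNU, hU⟩, hmin⟩ := (wellFounded_lt (α := Submodule ℂ V)).has_min
    {U | N < U ∧ ∀ a ∈ A, ∀ v ∈ U, a v ∈ U} ⟨⊤, lt_top_iff_ne_top.2 hNt, by simp⟩
  obtain ⟨x, hxU, hxN⟩ := SetLike.exists_of_lt hNU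
  refine ⟨x, hxN, ?_⟩
  by_contra! hcon
  obtain ⟨b, hb, hbx⟩ := hcon
  -- If `b x ∉ N`, then by minimality `U = A x + N`, so `x = a x + n` with `a ∈ A`, `n ∈ N`;
  -- thus `a` fixes `x` modulo `N`, contradicting its nilpotency.
  let W : Submodule ℂ V := A.toSubmodule.map (LinearMap.applyₗ x) ⊔ N
  have hWU : W ≤ U := sup_le (by rintro _ ⟨a, ha, rfl⟩; exact hU a ha x hxU) hNU.le
  have hNW : N < W := lt_of_le_of_ne le_sup_right fun h => hbx (h ▸
    (le_sup_left : _ ≤ W) ⟨b, hb, rfl⟩)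
  have hWinv : ∀ a ∈ A, ∀ v ∈ W, a v ∈ W := by
    intro a ha v hv
    obtain ⟨_, ⟨c, hc, rfl⟩, n, hn, rfl⟩ := Submodule.mem_sup.1 hv
    rw [map_add]
    exact add_mem ((le_sup_left : _ ≤ W) ⟨a * c, A.mul_mem ha hc, rfl⟩)
      ((le_sup_right : _ ≤ W) (hN a ha n hn))
  have hxW : x ∈ W := by
    rw [eq_of_le_of_not_lt hWU (hmin W ⟨hNW, hWinv⟩)]; exact hxU
  obtain ⟨_, ⟨a, ha, rfl⟩, n, hn, hx⟩ := Submodule.mem_sup.1 hxW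
  have hx' : a x + n = x := hx
  have hpow : ∀ k, (a ^ k) x - x ∈ N := by
    intro k
    induction k with
    | zero => simp
    | succ k ih =>
      have h1 := sub_mem (hN a ha _ ih) hn
      have : (a ^ (k + 1)) x - x = a ((a ^ k) x - x) - n := by
        rw [map_sub, pow_succ', Module.End.mul_apply, sub_sub, hx']
      rwa [this]
  obtain ⟨k, hk⟩ := hA a ha
  apply hxN
  simpa [hk] using hpow k

/-- Nilpotency of a nil algebra of operators, with index at most the dimension. -/
theorem prod_eq_zero_of_forall_isNilpotent {V : Type*} [AddCommGroup V] [Module ℂ V] [FiniteDimensional ℂ V]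
    (A : NonUnitalSubalgebra ℂ (Module.End ℂ V)) (hA : ∀ a ∈ A, IsNilpotent a)
    (L : List (Module.End ℂ V)) (hL : ∀ a ∈ L, a ∈ A) (hlen : L.length = Module.finrank ℂ V) :
    L.prod = 0 := by
  let step (N : Submodule ℂ V) : Submodule ℂ V := ⨅ a : A, N.comap (a : Module.End ℂ V)
  let N (k : ℕ) : Submodule ℂ V := step^[k] ⊥
  have hmem : ∀ k v, v ∈ N (k + 1) ↔ ∀ a ∈ A, a v ∈ N k := by
    intro k v
    simp only [N, Function.iterate_succ_apply', step, Submodule.mem_iInf, Submodule.mem_comap,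
      Subtype.forall]
  have hmono : ∀ k, N k ≤ N (k + 1) := by
    intro k
    induction k with
    | zero => exact bot_le
    | succ k ih => exact fun v hv => (hmem _ _).2 fun a ha => ih ((hmem _ _).1 hv a ha)
  have hdim : ∀ k ≤ Module.finrank ℂ V, k ≤ Module.finrank ℂ (N k) := by
    intro k
    induction k with
    | zero => simp
    | succ k ih =>
      intro hk
      specialize ih (by omega)
      by_cases ht : N k = ⊤
      · have : N (k + 1) = ⊤ := top_le_iff.1 (ht ▸ hmono k)
        rwa [this, finrank_top]
      · obtain ⟨v, hv, hv'⟩ := exists_notMem_forall_apply_mem A hA (N k)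
          (fun a ha v hv => (hmem _ _).1 (hmono k hv) a ha) ht
        have := Submodule.finrank_lt_finrank_of_lt
          (lt_of_le_of_ne (hmono k) fun h => hv (h ▸ (hmem k v).2 hv'))
        omega
  have htop : N (Module.finrank ℂ V) = ⊤ :=
    Submodule.eq_top_of_finrank_eq (le_antisymm (Submodule.finrank_le _) (hdim _ le_rfl))
  have hkill : ∀ L : List (Module.End ℂ V), (∀ a ∈ L, a ∈ A) → ∀ j, ∀ v ∈ N (L.length + j),
      L.prod v ∈ N j := by
    intro L
    induction L with
    | nil => simp
    | cons a L ih =>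
      intro hL j v hv
      rw [List.prod_cons, Module.End.mul_apply]
      refine (hmem _ _).1 (ih (fun b hb => hL b (by simp [hb])) (j + 1) v ?_) a (hL a (by simp))
      convert hv using 2
      simp; omega
  ext v
  have := hkill L hL 0 v (by rw [add_zero, hlen, htop]; trivial)
  simpa [N] using this

/-- If every finite product (of length ≥ 1) of elements of a set `S` of `m×m` complex
matrices has trace zero, then every product of `m` elements of `S` is the zero matrix. -/
theorem stmt2 (m : ℕ) (S : Set (Matrix (Fin m) (Fin m) ℂ))
    (htr : ∀ L : List (Matrix (Fin m) (Fin m) ℂ), L ≠ [] → (∀ M ∈ L, M ∈ S) →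
      L.prod.trace = 0) :
    ∀ L : List (Matrix (Fin m) (Fin m) ℂ), L.length = m → (∀ M ∈ L, M ∈ S) →
      L.prod = 0 := by
  intro L hlen hL
  let φ : Matrix (Fin m) (Fin m) ℂ ≃ₐ[ℂ] Module.End ℂ (Fin m → ℂ) := Matrix.toLinAlgEquiv'
  have hφ : ∀ M, LinearMap.trace ℂ _ (φ M) = M.trace := fun M => Matrix.trace_toLin'_eq M
  let A := NonUnitalAlgebra.adjoin ℂ (φ '' S)
  have hcl : ∀ a ∈ Subsemigroup.closure (φ '' S),
      ∃ L : List (Matrix (Fin m) (Fin m) ℂ), L ≠ [] ∧ (∀ M ∈ L, M ∈ S) ∧ φ L.prod = a := by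
    intro a ha
    induction ha using Subsemigroup.closure_induction with
    | mem a ha =>
      obtain ⟨M, hM, rfl⟩ := ha
      exact ⟨[M], by simp, by simpa using hM, by simp⟩
    | mul a b _ _ ha hb =>
      obtain ⟨L₁, h₁, hS₁, rfl⟩ := ha
      obtain ⟨L₂, h₂, hS₂, rfl⟩ := hb
      refine ⟨L₁ ++ L₂, by simp [h₁], fun M hM => ?_, by rw [List.prod_append, map_mul]⟩
      exact (List.mem_append.1 hM).elim (hS₁ M) (hS₂ M)
  have hAtr : ∀ a ∈ A, LinearMap.trace ℂ _ a = 0 := by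
    intro a ha
    have hle : A.toSubmodule ≤ LinearMap.ker (LinearMap.trace ℂ (Fin m → ℂ)) := by
      rw [NonUnitalAlgebra.adjoin_eq_span, Submodule.span_le]
      intro b hb
      obtain ⟨L, hne, hS, rfl⟩ := hcl b hb
      exact (hφ _).trans (htr L hne hS)
    exact hle ha
  have hApow : ∀ a ∈ A, ∀ k, a ^ (k + 1) ∈ A := by
    intro a ha k
    induction k with
    | zero => simpa using ha
    | succ k ih => rw [pow_succ]; exact A.mul_mem ih ha
  have := prod_eq_zero_of_forall_isNilpotent A (fun a ha => isNilpotent_of_trace_pow a fun k => hAtr _ (hApow a ha k))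
    (L.map φ) (by
      intro a ha
      obtain ⟨M, hM, rfl⟩ := List.mem_map.1 ha
      exact NonUnitalAlgebra.subset_adjoin ℂ ⟨M, hL M hM, rfl⟩) (by simp [hlen])
  rw [← map_list_prod] at this
  exact (map_eq_zero_iff φ φ.injective).1 this
end

section
/- If an MPO tensor A is simple, then A generates an MPU, i.e., U^{(N)} is unitary for every N ≥ 2. -/
/-!
The entry `(U†U)_{ij}` is the trace of `T^{i₁j₁} ⋯ T^{i_N j_N}` (`star_mpoU_mul_apply`), by the
mixed-product property of the Kronecker product. Write `P = b aᵀ`, so that `P T^{ij} P = δ_{ij} P`.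
In a product `T_x T_y T_z ⋯` of length at least three, simplicity inserts `P` on both sides of
`T_y`, which is thereby replaced by its scalar `δ_y`, and the remaining `P` may be dropped
again. This reduces the trace to `Tr (T_x T_y) = Tr (T_x P T_y)`; by cyclicity and simplicity once
more this is `Tr (P T_y P T_x) = δ_y δ_x` (`trace_prod_of_split`). Hence `U†U = 1`, and a
one-sided inverse of a square matrix is two-sided.
-/

open scoped Kronecker Matrix

/-- `T^{ij} = Σ_m conj(A^{mi}) ⊗ A^{mj}`. -/
noncomputable def Tmat (d D : ℕ) (A : Fin d → Fin d → Matrix (Fin D) (Fin D) ℂ)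
    (i j : Fin d) : Matrix (Fin D × Fin D) (Fin D × Fin D) ℂ :=
  ∑ m : Fin d, ((A m i).map (starRingEnd ℂ)) ⊗ₖ (A m j)

/-- Noncommutative distributivity: an ordered product of sums is the sum over all choice functions
of the ordered products. -/
lemma list_prod_ofFn_sum {R : Type*} [Semiring R] {d : ℕ} :
    ∀ (N : ℕ) (F : Fin N → Fin d → R),
      (List.ofFn fun k => ∑ m, F k m).prod =
        ∑ f : Fin N → Fin d, (List.ofFn fun k => F k (f k)).prod := by
  intro N
  induction N with
  | zero => intro F; simp
  | succ n ih =>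
    intro F
    rw [List.ofFn_succ, List.prod_cons, ih, Finset.sum_mul_sum, ← Fintype.sum_prod_type',
      ← (Fin.consEquiv fun _ : Fin (n + 1) => Fin d).sum_comp]
    simp [Fin.consEquiv, List.ofFn_succ]

lemma list_prod_ofFn_kronecker {D : ℕ} :
    ∀ (N : ℕ) (X Y : Fin N → Matrix (Fin D) (Fin D) ℂ),
      (List.ofFn fun k => (X k).map (starRingEnd ℂ) ⊗ₖ Y k).prod =
        ((List.ofFn X).prod.map (starRingEnd ℂ)) ⊗ₖ (List.ofFn Y).prod := by
  intro N
  induction N with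
  | zero => intro X Y; simp [Matrix.map_one]
  | succ n ih =>
    intro X Y
    simp only [List.ofFn_succ, List.prod_cons]
    rw [ih, ← Matrix.mul_kronecker_mul, Matrix.map_mul]

lemma star_mpoU_mul_apply (d D : ℕ) (A : Fin d → Fin d → Matrix (Fin D) (Fin D) ℂ) (N : ℕ)
    (i j : Fin N → Fin d) :
    (star (mpoU d D A N) * mpoU d D A N) i j =
      (List.ofFn fun k => Tmat d D A (i k) (j k)).prod.trace := by
  simp only [Tmat]
  rw [list_prod_ofFn_sum N fun k m => ((A m (i k)).map (starRingEnd ℂ)) ⊗ₖ (A m (j k)),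
    Matrix.trace_sum, Matrix.mul_apply]
  refine Finset.sum_congr rfl fun f _ => ?_
  rw [list_prod_ofFn_kronecker N (fun k => A (f k) (i k)) fun k => A (f k) (j k),
    Matrix.trace_kronecker]
  simp [mpoU, Matrix.star_apply, Matrix.trace]

/-- For a family of matrices `T` with `T_x T_y = T_x (b aᵀ) T_y`, the trace of a product of at least
two of the `T_x` is the product of the corresponding scalars `aᵀ T_x b`. -/
lemma trace_prod_of_split {ι n : Type*} [Fintype n] [DecidableEq n] (T : ι → Matrix n n ℂ)
    (a b : n → ℂ)
    (hsplit : ∀ x y, T x * T y = T x * Matrix.vecMulVec b a * T y) (x : ι) :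
    ∀ (l : List ι) (y : ι), (T x * (T y * (l.map T).prod)).trace =
      (a ⬝ᵥ (T x *ᵥ b)) * ((a ⬝ᵥ (T y *ᵥ b)) * (l.map fun z => a ⬝ᵥ (T z *ᵥ b)).prod) := by
  have hP : ∀ z, Matrix.vecMulVec b a * T z * Matrix.vecMulVec b a =
      (a ⬝ᵥ (T z *ᵥ b)) • Matrix.vecMulVec b a := by
    intro z
    rw [Matrix.mul_assoc, Matrix.mul_vecMulVec, Matrix.vecMulVec_mul_vecMulVec,
      Matrix.vecMulVec_smul]
  intro l
  induction l with
  | nil =>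
    intro y
    have h : (T x * T y).trace = (Matrix.vecMulVec b a * T y * Matrix.vecMulVec b a * T x).trace := by
      rw [hsplit, Matrix.mul_assoc, Matrix.trace_mul_comm, Matrix.mul_assoc, hsplit]
      simp only [Matrix.mul_assoc]
    simp only [List.map_nil, List.prod_nil, mul_one]
    rw [h, hP, Matrix.smul_mul, Matrix.trace_smul, Matrix.trace_mul_comm, Matrix.mul_vecMulVec,
      Matrix.trace_vecMulVec, dotProduct_comm (T x *ᵥ b), smul_eq_mul, mul_comm]
  | cons z l ih =>
    intro y
    have h : T x * (T y * T z) = (a ⬝ᵥ (T y *ᵥ b)) • (T x * T z) := by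
      calc T x * (T y * T z)
          = T x * T y * Matrix.vecMulVec b a * T z := by
            rw [hsplit y z]; simp only [Matrix.mul_assoc]
        _ = T x * (Matrix.vecMulVec b a * T y * Matrix.vecMulVec b a) * T z := by
            rw [hsplit x y]; simp only [Matrix.mul_assoc]
        _ = (a ⬝ᵥ (T y *ᵥ b)) • (T x * T z) := by
            rw [hP, Matrix.mul_smul, Matrix.smul_mul, ← hsplit]
    simp only [List.map_cons, List.prod_cons]
    rw [← Matrix.mul_assoc (T y), ← Matrix.mul_assoc (T x), h, Matrix.smul_mul, Matrix.trace_smul,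
      Matrix.mul_assoc, ih, smul_eq_mul]
    ring

/-- If an MPO tensor `A` is simple (witnessed by vectors `a`, `b` with `aᵀ T^{ij} b = δ_{ij}`
and `T^{ij}T^{kl} = T^{ij}(b aᵀ)T^{kl}`), then `A` generates an MPU: `U^{(N)}` is unitary for
every `N ≥ 2`. -/
theorem stmt3 (d D : ℕ) (hd : 1 ≤ d) (hD : 1 ≤ D)
    (A : Fin d → Fin d → Matrix (Fin D) (Fin D) ℂ)
    (a b : Fin D × Fin D → ℂ)
    (hab : ∀ i j : Fin d, a ⬝ᵥ (Tmat d D A i j *ᵥ b) = if i = j then 1 else 0)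
    (hsplit : ∀ i j k l : Fin d, Tmat d D A i j * Tmat d D A k l =
      Tmat d D A i j * Matrix.vecMulVec b a * Tmat d D A k l) :
    ∀ N : ℕ, 2 ≤ N → mpoU d D A N ∈ Matrix.unitaryGroup (Fin N → Fin d) ℂ := by
  intro N hN
  rw [Matrix.mem_unitaryGroup_iff']
  ext i j
  rw [star_mpoU_mul_apply]
  obtain ⟨n, rfl⟩ := Nat.exists_eq_add_of_le' hN
  have h := trace_prod_of_split (fun p : Fin d × Fin d => Tmat d D A p.1 p.2) a b
    (fun x y => hsplit _ _ _ _) (i 0, j 0)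
    (List.ofFn fun k : Fin n => (i k.succ.succ, j k.succ.succ)) (i 1, j 1)
  simp only [List.map_ofFn, Function.comp_def, hab] at h
  have h1 : (Fin.succ 0 : Fin (n + 2)) = 1 := rfl
  rw [List.ofFn_succ, List.ofFn_succ, List.prod_cons, List.prod_cons, h1, h, List.prod_ofFn,
    ← h1, ← Fin.prod_univ_succ (fun k : Fin (n + 1) => if i k.succ = j k.succ then (1 : ℂ) else 0),
    ← Fin.prod_univ_succ (fun k : Fin (n + 2) => if i k = j k then (1 : ℂ) else 0),
    Matrix.one_apply]
  simp [Finset.prod_ite_zero, funext_iff]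
end

section
/- If A is an MPO tensor in canonical form II that generates an MPU, then r·ℓ ≥ d², where r and ℓ are the two reshaping ranks of A. -/
/-!
The bound is a rank count for the two-site operator `U^{(2)}`. Factor the reshapings through spaces of
dimension equal to their ranks, `M₁ = X * Y` and `M₂ = Z * W`. Inserting these at the first and at
the second site of `Tr(A^{i₁j₁} A^{i₂j₂})` gives
`U_{(i₁i₂),(j₁j₂)} = ∑_{s,t} (∑_β Y_{s,(i₁,β)} Z_{(β,i₂),t}) (∑_α X_{(α,j₁),s} W_{t,(j₂,α)})`:
all output indices sit in the first factor and all input indices in the second, so `U^{(2)}`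
factors through a space of dimension `r * ℓ`. Being invertible, it has rank `d²`, hence
`d² ≤ r * ℓ`.
-/

open scoped Kronecker Matrix

/-- The reshaping `M₁` of the tensor, with entry `A^{ij}_{αβ}` at row `(α,j)`, column `(i,β)`. -/
def reshape1 (d D : ℕ) (A : Fin d → Fin d → Matrix (Fin D) (Fin D) ℂ) :
    Matrix (Fin D × Fin d) (Fin d × Fin D) ℂ :=
  Matrix.of fun p q => A q.1 p.2 p.1 q.2

/-- The reshaping `M₂` of the tensor, with entry `A^{ij}_{αβ}` at row `(α,i)`, column `(j,β)`. -/
def reshape2 (d D : ℕ) (A : Fin d → Fin d → Matrix (Fin D) (Fin D) ℂ) :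
    Matrix (Fin D × Fin d) (Fin d × Fin D) ℂ :=
  Matrix.of fun p q => A p.2 q.1 p.1 q.2

/-- Rank factorization: a matrix factors through a space of dimension its rank. -/
lemma exists_rank_factorization {m n : Type*} [Fintype m] [Fintype n]
    (M : Matrix m n ℂ) :
    ∃ (X : Matrix m (Fin M.rank) ℂ) (Y : Matrix (Fin M.rank) n ℂ), M = X * Y := by
  classical
  let b := Module.finBasis ℂ (LinearMap.range M.mulVecLin)
  refine ⟨Matrix.of fun p s => (b s : m → ℂ) p,
    Matrix.of fun s q => b.repr ⟨M.mulVecLin (Pi.single q 1), LinearMap.mem_range_self _ _⟩ s, ?_⟩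
  ext p q
  have h := congrArg (fun v : LinearMap.range M.mulVecLin => (v : m → ℂ) p)
    (b.sum_repr ⟨M.mulVecLin (Pi.single q 1), LinearMap.mem_range_self _ _⟩)
  simp only [Submodule.coe_sum, Submodule.coe_smul, Finset.sum_apply, Pi.smul_apply,
    smul_eq_mul, Matrix.mulVecLin_apply, Matrix.mulVec_single_one, Matrix.col_apply] at h
  rw [Matrix.mul_apply, ← h]
  refine Finset.sum_congr rfl fun s _ => ?_
  simp only [Matrix.mulVecLin_apply, Matrix.mulVec_single_one]
  exact mul_comm _ _

/-- If an MPO tensor in canonical form II generates an MPU, then the product of its two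
reshaping ranks satisfies `r·ℓ ≥ d²`. -/
theorem stmt6 (d D : ℕ) (hd : 1 ≤ d) (hD : 1 ≤ D)
    (A : Fin d → Fin d → Matrix (Fin D) (Fin D) ℂ)
    (hMPU : ∀ N : ℕ, 2 ≤ N → mpoU d D A N ∈ Matrix.unitaryGroup (Fin N → Fin d) ℂ)
    (ρ : Fin D → ℝ) (hρpos : ∀ α, 0 < ρ α) (hρtr : ∑ α, ρ α = 1)
    (hCF1 : ∑ i : Fin d, ∑ j : Fin d, (A i j)ᴴ * A i j
      = (d : ℂ) • (1 : Matrix (Fin D) (Fin D) ℂ))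
    (hCF2 : ∑ i : Fin d, ∑ j : Fin d,
        A i j * Matrix.diagonal (fun α => (ρ α : ℂ)) * (A i j)ᴴ =
        (d : ℂ) • Matrix.diagonal (fun α => (ρ α : ℂ))) :
    d ^ 2 ≤ (reshape1 d D A).rank * (reshape2 d D A).rank := by
  obtain ⟨X, Y, hXY⟩ := exists_rank_factorization (reshape1 d D A)
  obtain ⟨Z, W, hZW⟩ := exists_rank_factorization (reshape2 d D A)
  have h1 : ∀ i j α β, A i j α β = ∑ s, X (α, j) s * Y s (i, β) := fun i j α β => by
    rw [← Matrix.mul_apply, ← hXY]; rfl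
  have h2 : ∀ i j α β, A i j α β = ∑ t, Z (α, i) t * W t (j, β) := fun i j α β => by
    rw [← Matrix.mul_apply, ← hZW]; rfl
  let P : Matrix (Fin 2 → Fin d) (Fin (reshape1 d D A).rank × Fin (reshape2 d D A).rank) ℂ :=
    Matrix.of fun i st => ∑ β, Y st.1 (i 0, β) * Z (β, i 1) st.2
  let Q : Matrix (Fin (reshape1 d D A).rank × Fin (reshape2 d D A).rank) (Fin 2 → Fin d) ℂ :=
    Matrix.of fun st j => ∑ α, X (α, j 0) st.1 * W st.2 (j 1, α)
  have hfac : mpoU d D A 2 = P * Q := by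
    ext i j
    have hU : mpoU d D A 2 i j
        = ∑ α, ∑ β, A (i 0) (j 0) α β * A (i 1) (j 1) β α := by
      simp [mpoU, Matrix.trace, Matrix.mul_apply]
    rw [hU, Matrix.mul_apply, Fintype.sum_prod_type]
    simp only [P, Q, Matrix.of_apply]
    calc _ = ∑ α, ∑ β, ∑ s, ∑ t,
          (Y s (i 0, β) * Z (β, i 1) t) * (X (α, j 0) s * W t (j 1, α)) := by
          refine Finset.sum_congr rfl fun α _ => Finset.sum_congr rfl fun β _ => ?_
          rw [h1 (i 0), h2 (i 1), Finset.sum_mul_sum]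
          exact Finset.sum_congr rfl fun s _ => Finset.sum_congr rfl fun t _ => by ring
      _ = ∑ α, ∑ s, ∑ t, ∑ β,
          (Y s (i 0, β) * Z (β, i 1) t) * (X (α, j 0) s * W t (j 1, α)) := by
          refine Finset.sum_congr rfl fun α _ => ?_
          rw [Finset.sum_comm]
          exact Finset.sum_congr rfl fun s _ => Finset.sum_comm
      _ = ∑ s, ∑ t, ∑ α, ∑ β,
          (Y s (i 0, β) * Z (β, i 1) t) * (X (α, j 0) s * W t (j 1, α)) := by
          rw [Finset.sum_comm]
          exact Finset.sum_congr rfl fun s _ => Finset.sum_comm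
      _ = _ := by
          refine Finset.sum_congr rfl fun s _ => Finset.sum_congr rfl fun t _ => ?_
          rw [Finset.sum_comm, Finset.sum_mul_sum]
  have hunit : IsUnit (mpoU d D A 2) :=
    IsUnit.of_mul_eq_one _ (Matrix.mem_unitaryGroup_iff.mp (hMPU 2 le_rfl))
  calc d ^ 2 = (mpoU d D A 2).rank := by rw [Matrix.rank_of_isUnit _ hunit]; simp
    _ ≤ P.rank := hfac ▸ Matrix.rank_mul_le_left P Q
    _ ≤ _ := by simpa using P.rank_le_card_width
end

section
/- Let A be an MPO tensor in canonical form II that generates an MPU. Then A is simple if and only if r·ℓ = d², where r and ℓ are the two reshaping ranks of A. -/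
/-!
Write the two rank factorizations of the tensor as `A^{ij} = X^j Y^i` (through `ℂ^r`) and
`A^{ij} = Z^i W^j` (through `ℂ^l`). Using them on alternate sites, `U^{(2)} = P Q` with gates
`P = Y Z` and `Q = W X` passing through `ℂ^r ⊗ ℂ^l`, and `U^{(4)} = (P ⊗ P) S (Q ⊗ Q)` with `S` an
exchange of legs (`U2_eq`, `U4_eq`). Moreover `T^{ij} T^{kl}` equals
`(conj X^i ⊗ X^j) 𝒴 𝒵 (conj W^k ⊗ W^l)` for the double layers `𝒴`, `𝒵` of `Y`, `Z`, and `𝒴 𝒵` is a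
realignment of the Gram matrix `M = P† P` (`doubled_mul_apply`).

Simplicity amounts to `T^{ij} T^{kl}` having the form `L^{ij} (R^{kl})ᵀ`: in that case
`rankOne_normalize` shows that the vectors can be taken to be the fixed points `1` and `ρ` of the
canonical form, and unitarity of `U^{(2)}` gives the normalization (`simple_of_rankOne`).

If `A` is simple, cancelling `X` and `W` (`strip`) gives `M = (Y (1 ⊗ ρ) Y†)ᵀ ⊗ Z† Z`, which is
positive definite. So `P` is injective and `r l ≤ d²`; the reverse inequality holds because the
invertible matrix `U^{(2)}` of size `d²` factors through `ℂ^r ⊗ ℂ^l`.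

If `r l = d²`, the gates are square, and unitarity of `U^{(2)}` and `U^{(4)}` makes `M ⊗ M` invariant
under an exchange of legs (`gram_exchange`). Hence `M` is a product operator, that is, `𝒴 𝒵` has
rank one (`doubled_rankOne`), and so `T^{ij} T^{kl}` has the form `L^{ij} (R^{kl})ᵀ`.
-/

open scoped Kronecker Matrix

/-- An MPO tensor is simple if there are vectors `a`, `b` with `aᵀ T^{ij} b = δ_{ij}` and
`T^{ij}T^{kl} = T^{ij}(b aᵀ)T^{kl}`. -/
def Simple (d D : ℕ) (A : Fin d → Fin d → Matrix (Fin D) (Fin D) ℂ) : Prop :=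
  ∃ a b : Fin D × Fin D → ℂ,
    (∀ i j : Fin d, a ⬝ᵥ (Tmat d D A i j *ᵥ b) = if i = j then 1 else 0) ∧
    (∀ i j k l : Fin d, Tmat d D A i j * Tmat d D A k l =
      Tmat d D A i j * Matrix.vecMulVec b a * Tmat d D A k l)

open Matrix
open scoped ComplexOrder

/-! ### Rank factorization -/

/-- Every matrix factors through `ℂ ^ rank` as a left-invertible times a right-invertible matrix. -/
theorem exists_rank_factorization_s7 {m n : Type*} [Fintype m] [DecidableEq m] [Fintype n]
    [DecidableEq n] (A : Matrix m n ℂ) :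
    ∃ (B : Matrix m (Fin A.rank) ℂ) (C : Matrix (Fin A.rank) n ℂ), A = B * C ∧
      (∃ G : Matrix (Fin A.rank) m ℂ, G * B = 1) ∧ ∃ H : Matrix n (Fin A.rank) ℂ, C * H = 1 := by
  let f : (n → ℂ) →ₗ[ℂ] (m → ℂ) := Matrix.toLin' A
  have hr : Module.finrank ℂ (LinearMap.range f) = A.rank := rfl
  let e : LinearMap.range f ≃ₗ[ℂ] (Fin A.rank → ℂ) :=
    LinearEquiv.ofFinrankEq _ _ (by rw [hr]; simp)
  let g : (Fin A.rank → ℂ) →ₗ[ℂ] (m → ℂ) := (LinearMap.range f).subtype ∘ₗ e.symm.toLinearMap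
  let h : (n → ℂ) →ₗ[ℂ] (Fin A.rank → ℂ) := e.toLinearMap ∘ₗ f.rangeRestrict
  have hgh : f = g ∘ₗ h := by
    ext x; simp [g, h]
  have hg : LinearMap.ker g = ⊥ := by
    rw [LinearMap.ker_eq_bot]
    exact Subtype.val_injective.comp e.symm.injective
  have hh : LinearMap.range h = ⊤ := by
    rw [LinearMap.range_eq_top]
    exact e.surjective.comp f.surjective_rangeRestrict
  obtain ⟨G, hG⟩ := g.exists_leftInverse_of_injective hg
  obtain ⟨H, hH⟩ := h.exists_rightInverse_of_surjective hh
  refine ⟨LinearMap.toMatrix' g, LinearMap.toMatrix' h, ?_, ⟨LinearMap.toMatrix' G, ?_⟩,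
    ⟨LinearMap.toMatrix' H, ?_⟩⟩
  · rw [← LinearMap.toMatrix'_comp, ← hgh, LinearMap.toMatrix'_toLin']
  · rw [← LinearMap.toMatrix'_comp, hG, LinearMap.toMatrix'_id]
  · rw [← LinearMap.toMatrix'_comp, hH, LinearMap.toMatrix'_id]

/-! ### Products `T^{ij} T^{kl}` of rank one -/

/-- If all products `T^{ij} T^{kl}` have the form `L^{ij} (R^{kl})ᵀ`, then `L^{ij}` and `R^{kl}` may
be replaced by `T^{ij} b` and `aᵀ T^{kl}` for *any* left and right eigenvectors `a`, `b` of
`∑ k, T^{kk}` at the eigenvalue `d` with `aᵀ b = 1`: applying `T^{ij} (∑ k, T^{kk})` to `b` shows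
that `T^{ij} b` is a multiple of `L^{ij}`, likewise on the left, and the two scalars are inverse to
each other. -/
theorem rankOne_normalize {d : ℕ} {n : Type*} [Fintype n] (hd : 1 ≤ d)
    (T : Fin d → Fin d → Matrix n n ℂ) (a b : n → ℂ) (L R : Fin d → Fin d → n → ℂ)
    (ha : a ᵥ* (∑ k, T k k) = (d : ℂ) • a) (hb : (∑ k, T k k) *ᵥ b = (d : ℂ) • b)
    (hab : a ⬝ᵥ b = 1)
    (hT : ∀ i j k l, T i j * T k l = vecMulVec (L i j) (R k l)) (i j k l : Fin d) :
    T i j * T k l = T i j * vecMulVec b a * T k l := by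
  have hd0 : (d : ℂ) ≠ 0 := by exact_mod_cast (by omega : d ≠ 0)
  have h1 : ∀ i j, (d : ℂ) • (T i j *ᵥ b) = (∑ k, R k k ⬝ᵥ b) • L i j := fun i j => by
    rw [← mulVec_smul, ← hb, mulVec_mulVec, Finset.mul_sum, sum_mulVec, Finset.sum_smul]
    refine Finset.sum_congr rfl fun k _ => ?_
    rw [hT, vecMulVec_mulVec]; ext x; simp [mul_comm]
  have h2 : ∀ k l, (d : ℂ) • (a ᵥ* T k l) = (∑ i, a ⬝ᵥ L i i) • R k l := fun k l => by
    rw [← smul_vecMul, ← ha, vecMul_vecMul, Finset.sum_mul, vecMul_sum, Finset.sum_smul]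
    refine Finset.sum_congr rfl fun i _ => ?_
    rw [hT, vecMul_vecMulVec]
  have h3 : (∑ k, R k k ⬝ᵥ b) * (∑ i, a ⬝ᵥ L i i) = (d : ℂ) * d := by
    have : a ⬝ᵥ (∑ i, (d : ℂ) • (T i i *ᵥ b)) = (d : ℂ) * d := by
      rw [← Finset.smul_sum, ← sum_mulVec, hb]; simp [hab]
    rw [← this, Finset.sum_congr rfl fun i _ => h1 i i, dotProduct_sum, Finset.mul_sum]
    simp
  have h4 : ((d : ℂ) * d) • (T i j * T k l) =
      ((d : ℂ) * d) • (T i j * vecMulVec b a * T k l) := by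
    rw [mul_vecMulVec, vecMulVec_mul, hT, ← h3]
    have : vecMulVec ((d : ℂ) • (T i j *ᵥ b)) ((d : ℂ) • (a ᵥ* T k l)) =
        ((d : ℂ) * d) • vecMulVec (T i j *ᵥ b) (a ᵥ* T k l) := by
      ext x y; simp [vecMulVec_apply]; ring
    rw [h3, ← this, h1, h2, ← h3]
    ext x y; simp [vecMulVec_apply]; ring
  exact smul_right_injective _ (mul_ne_zero hd0 hd0) h4

theorem conj_kron_mul {l m n l' m' n' : Type*} [Fintype m] [Fintype m']
    (A : Matrix l m ℂ) (B : Matrix m n ℂ) (A' : Matrix l' m' ℂ) (B' : Matrix m' n' ℂ) :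
    (A * B).map (starRingEnd ℂ) ⊗ₖ (A' * B') =
      (A.map (starRingEnd ℂ) ⊗ₖ A') * (B.map (starRingEnd ℂ) ⊗ₖ B') := by
  rw [Matrix.map_mul, mul_kronecker_mul]

theorem Tmat_mul {d D : ℕ} (A : Fin d → Fin d → Matrix (Fin D) (Fin D) ℂ) (i j k l : Fin d) :
    Tmat d D A i j * Tmat d D A k l =
      ∑ m, ∑ n, (A m i * A n k).map (starRingEnd ℂ) ⊗ₖ (A m j * A n l) := by
  simp only [Tmat, Finset.sum_mul, Finset.mul_sum, conj_kron_mul]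
  exact Finset.sum_comm

/-! ### The unitaries on two and four sites -/

/-- `U^{(2)}` indexed by pairs. The column index is the exchanged pair `(j₂, j₁)`, which makes the
factorization `U2_eq` a plain matrix product. -/
noncomputable def U2 {d D : ℕ} (A : Fin d → Fin d → Matrix (Fin D) (Fin D) ℂ) :
    Matrix (Fin d × Fin d) (Fin d × Fin d) ℂ :=
  of fun p q => (A p.1 q.2 * A p.2 q.1).trace

/-- `U^{(4)}` indexed by pairs of pairs. The rows are `((i₁, i₂), (i₃, i₄))`, the columns are
`((j₂, j₃), (j₄, j₁))`: the input pairs straddle the output pairs. -/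
noncomputable def U4 {d D : ℕ} (A : Fin d → Fin d → Matrix (Fin D) (Fin D) ℂ) :
    Matrix ((Fin d × Fin d) × (Fin d × Fin d)) ((Fin d × Fin d) × (Fin d × Fin d)) ℂ :=
  of fun p q => (A p.1.1 q.2.2 * A p.1.2 q.1.1 * (A p.2.1 q.1.2 * A p.2.2 q.2.1)).trace

theorem submatrix_isometry {m n m' n' : Type*} [Fintype m] [Fintype n] [DecidableEq n] [Fintype m']
    [DecidableEq n'] (U : Matrix m n ℂ) (hU : Uᴴ * U = 1) (e : m' ≃ m) (f : n' ≃ n) :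
    (U.submatrix e f)ᴴ * U.submatrix e f = 1 := by
  rw [conjTranspose_submatrix, submatrix_mul_equiv, hU, submatrix_one_equiv]

theorem U2_isometry {d D : ℕ} (A : Fin d → Fin d → Matrix (Fin D) (Fin D) ℂ)
    (h : mpoU d D A 2 ∈ Matrix.unitaryGroup (Fin 2 → Fin d) ℂ) : (U2 A)ᴴ * U2 A = 1 := by
  have := submatrix_isometry _ (mem_unitaryGroup_iff'.1 h) (finTwoArrowEquiv (Fin d)).symm
    ((Equiv.prodComm _ _).trans (finTwoArrowEquiv (Fin d)).symm)
  convert this using 2 <;>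
  · ext p q
    simp [U2, mpoU, List.ofFn_succ]

/-- The row labelling of `U4`. -/
def fourEquiv (α : Type*) : (α × α) × (α × α) ≃ (Fin 4 → α) where
  toFun p := ![p.1.1, p.1.2, p.2.1, p.2.2]
  invFun v := ((v 0, v 1), (v 2, v 3))
  left_inv _ := rfl
  right_inv v := by ext i; fin_cases i <;> rfl

/-- Exchange of the first components of two pairs. -/
def exch (α β γ δ : Type*) : (α × β) × (γ × δ) ≃ (γ × β) × (α × δ) where
  toFun p := ((p.2.1, p.1.2), (p.1.1, p.2.2))
  invFun p := ((p.2.1, p.1.2), (p.1.1, p.2.2))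
  left_inv _ := rfl
  right_inv _ := rfl

/-- The column labelling of `U4`. -/
def colFour (α : Type*) : (α × α) × (α × α) ≃ (Fin 4 → α) where
  toFun p := ![p.2.2, p.1.1, p.1.2, p.2.1]
  invFun v := ((v 1, v 2), (v 3, v 0))
  left_inv _ := rfl
  right_inv v := by ext i; fin_cases i <;> rfl

theorem U4_isometry {d D : ℕ} (A : Fin d → Fin d → Matrix (Fin D) (Fin D) ℂ)
    (h : mpoU d D A 4 ∈ Matrix.unitaryGroup (Fin 4 → Fin d) ℂ) : (U4 A)ᴴ * U4 A = 1 := by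
  have := submatrix_isometry _ (mem_unitaryGroup_iff'.1 h) (fourEquiv (Fin d))
    (colFour (Fin d))
  convert this using 2 <;>
  · ext p q
    simp [U4, mpoU, List.ofFn_succ, fourEquiv, colFour, mul_assoc, Fin.succ]
    rfl

/-- The entries of `U^{(2)†} U^{(2)} = 1`, written as traces of products of the `T^{ij}`. -/
theorem trace_Tmat_mul {d D : ℕ} (A : Fin d → Fin d → Matrix (Fin D) (Fin D) ℂ)
    (h : (U2 A)ᴴ * U2 A = 1) (i j k l : Fin d) :
    (Tmat d D A i j * Tmat d D A k l).trace =
      (if i = j then 1 else 0) * (if k = l then 1 else 0) := by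
  have h1 := congrFun (congrFun h (k, i)) (l, j)
  simp only [Matrix.one_apply, Prod.mk.injEq, Matrix.mul_apply, Fintype.sum_prod_type,
    conjTranspose_apply, U2, of_apply] at h1
  rw [Tmat_mul]
  simp only [trace_sum, trace_kronecker]
  have h2 : ∀ M : Matrix (Fin D) (Fin D) ℂ, (M.map (starRingEnd ℂ)).trace = star M.trace :=
    fun M => by simp [trace]
  simp only [h2, h1]
  by_cases h : i = j <;> by_cases h' : k = l <;> simp [h, h']

/-- Rank-one products suffice for simplicity: the normalization `aᵀ T^{ij} b = δ_{ij}` comes from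
the unitarity of `U^{(2)}`. -/
theorem simple_of_rankOne {d D : ℕ} (hd : 1 ≤ d)
    (A : Fin d → Fin d → Matrix (Fin D) (Fin D) ℂ) (h : (U2 A)ᴴ * U2 A = 1)
    (a b : Fin D × Fin D → ℂ) (L R : Fin d → Fin d → Fin D × Fin D → ℂ)
    (ha : a ᵥ* (∑ k, Tmat d D A k k) = (d : ℂ) • a)
    (hb : (∑ k, Tmat d D A k k) *ᵥ b = (d : ℂ) • b) (hab : a ⬝ᵥ b = 1)
    (hT : ∀ i j k l, Tmat d D A i j * Tmat d D A k l = vecMulVec (L i j) (R k l)) :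
    Simple d D A := by
  have hd0 : (d : ℂ) ≠ 0 := by exact_mod_cast (by omega : d ≠ 0)
  have hR := rankOne_normalize hd (Tmat d D A) a b L R ha hb hab hT
  refine ⟨a, b, fun i j => ?_, hR⟩
  have h1 : ∀ k l, (if i = j then (1 : ℂ) else 0) * (if k = l then 1 else 0) =
      (a ⬝ᵥ (Tmat d D A k l *ᵥ b)) * (a ⬝ᵥ (Tmat d D A i j *ᵥ b)) := fun k l => by
    rw [← trace_Tmat_mul A h, hR, mul_vecMulVec, vecMulVec_mul, trace_vecMulVec,
      dotProduct_comm, ← dotProduct_mulVec, mulVec_mulVec, hR, mul_vecMulVec, vecMulVec_mul,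
      vecMulVec_mulVec, ← dotProduct_mulVec]
    simp [mul_comm]
  have h2 : ∑ k, a ⬝ᵥ (Tmat d D A k k *ᵥ b) = d := by
    rw [← dotProduct_sum, ← sum_mulVec, hb]; simp [hab]
  have h3 : (d : ℂ) * (if i = j then 1 else 0) = d * (a ⬝ᵥ (Tmat d D A i j *ᵥ b)) := by
    conv_rhs => rw [← h2, Finset.sum_mul, ← Finset.sum_congr rfl fun k _ => h1 k k]
    simp
  exact (mul_left_cancel₀ hd0 h3).symm

/-! ### Factoring the tensor along the two cuts -/

section Factored

variable {d D r l : ℕ}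

/-- The two-site gate `ℂ^r ⊗ ℂ^l → ℂ^d ⊗ ℂ^d` carrying the output indices, obtained by contracting
the right factor of the cut `A^{ij} = X^j Y^i` with the left factor of the cut `A^{ij} = Z^i W^j` on
the next site. -/
noncomputable def outGate (Y : Fin d → Matrix (Fin r) (Fin D) ℂ)
    (Z : Fin d → Matrix (Fin D) (Fin l) ℂ) :
    Matrix (Fin d × Fin d) (Fin r × Fin l) ℂ :=
  of fun p q => (Y p.1 * Z p.2) q.1 q.2

/-- The two-site gate `ℂ^d ⊗ ℂ^d → ℂ^r ⊗ ℂ^l` carrying the input indices, obtained by contracting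
`W` on one site with `X` on the next. -/
noncomputable def inGate (W : Fin d → Matrix (Fin l) (Fin D) ℂ)
    (X : Fin d → Matrix (Fin D) (Fin r) ℂ) :
    Matrix (Fin r × Fin l) (Fin d × Fin d) ℂ :=
  of fun q p => (W p.1 * X p.2) q.2 q.1

theorem U2_eq (A : Fin d → Fin d → Matrix (Fin D) (Fin D) ℂ)
    (X : Fin d → Matrix (Fin D) (Fin r) ℂ) (Y : Fin d → Matrix (Fin r) (Fin D) ℂ)
    (Z : Fin d → Matrix (Fin D) (Fin l) ℂ) (W : Fin d → Matrix (Fin l) (Fin D) ℂ)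
    (hXY : ∀ i j, A i j = X j * Y i) (hZW : ∀ i j, A i j = Z i * W j) :
    U2 A = outGate Y Z * inGate W X := by
  ext p q
  simp only [U2, of_apply]
  rw [hXY, hZW, Matrix.mul_assoc, trace_mul_comm, ← Matrix.mul_assoc, Matrix.mul_assoc]
  rw [trace]
  simp only [diag_apply]
  rw [Matrix.mul_apply (M := outGate Y Z), Fintype.sum_prod_type]
  exact Finset.sum_congr rfl fun s _ => Matrix.mul_apply

theorem trace_four {m n : Type*} [Fintype m] [Fintype n] (a b : Matrix m n ℂ)
    (w v : Matrix n m ℂ) : (a * w * (b * v)).trace =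
      ∑ s, ∑ t, ∑ s', ∑ t', a s t * b s' t' * (w t s' * v t' s) := by
  simp only [trace, diag_apply]
  refine Finset.sum_congr rfl fun s _ => ?_
  rw [Matrix.mul_apply, Finset.sum_comm]
  refine Finset.sum_congr rfl fun s' _ => ?_
  rw [Matrix.mul_apply, Matrix.mul_apply, Finset.sum_mul_sum]
  refine Finset.sum_congr rfl fun t _ => Finset.sum_congr rfl fun t' _ => ?_
  ring

theorem U4_eq (A : Fin d → Fin d → Matrix (Fin D) (Fin D) ℂ)
    (X : Fin d → Matrix (Fin D) (Fin r) ℂ) (Y : Fin d → Matrix (Fin r) (Fin D) ℂ)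
    (Z : Fin d → Matrix (Fin D) (Fin l) ℂ) (W : Fin d → Matrix (Fin l) (Fin D) ℂ)
    (hXY : ∀ i j, A i j = X j * Y i) (hZW : ∀ i j, A i j = Z i * W j) :
    U4 A = (outGate Y Z ⊗ₖ outGate Y Z) *
      (inGate W X ⊗ₖ inGate W X).submatrix (exch _ _ _ _) id := by
  ext p q
  simp only [U4, of_apply]
  rw [hXY p.1.1, hZW p.1.2, hXY p.2.1, hZW p.2.2]
  have h1 : (X q.2.2 * Y p.1.1 * (Z p.1.2 * W q.1.1) *
        (X q.1.2 * Y p.2.1 * (Z p.2.2 * W q.2.1))).trace =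
      ((Y p.1.1 * Z p.1.2) * (W q.1.1 * X q.1.2) *
        ((Y p.2.1 * Z p.2.2) * (W q.2.1 * X q.2.2))).trace := by
    rw [Matrix.mul_assoc, Matrix.mul_assoc, trace_mul_comm]
    simp only [Matrix.mul_assoc]
  rw [h1, Matrix.mul_apply (M := outGate Y Z ⊗ₖ outGate Y Z)]
  rw [trace_four, Fintype.sum_prod_type, Fintype.sum_prod_type]
  simp only [Fintype.sum_prod_type]
  rfl

/-- The double layer `∑ m, conj(Y^m) ⊗ Y^m` of a family of matrices. -/
noncomputable def doubled {m n : Type*} (Y : Fin d → Matrix m n ℂ) : Matrix (m × m) (n × n) ℂ :=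
  ∑ m, (Y m).map (starRingEnd ℂ) ⊗ₖ Y m

theorem Tmat_eq_left (A : Fin d → Fin d → Matrix (Fin D) (Fin D) ℂ)
    (X : Fin d → Matrix (Fin D) (Fin r) ℂ) (Y : Fin d → Matrix (Fin r) (Fin D) ℂ)
    (hXY : ∀ i j, A i j = X j * Y i) (i j : Fin d) :
    Tmat d D A i j = ((X i).map (starRingEnd ℂ) ⊗ₖ X j) * doubled Y := by
  simp only [Tmat, doubled, hXY, conj_kron_mul, Matrix.mul_sum]

theorem Tmat_eq_right (A : Fin d → Fin d → Matrix (Fin D) (Fin D) ℂ)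
    (Z : Fin d → Matrix (Fin D) (Fin l) ℂ) (W : Fin d → Matrix (Fin l) (Fin D) ℂ)
    (hZW : ∀ i j, A i j = Z i * W j) (i j : Fin d) :
    Tmat d D A i j = doubled Z * ((W i).map (starRingEnd ℂ) ⊗ₖ W j) := by
  simp only [Tmat, doubled, hZW, conj_kron_mul, Matrix.sum_mul]

/-- The product of the double layers of `Y` and `Z` is a realignment of the Gram matrix of the
output gate. -/
theorem doubled_mul_apply (Y : Fin d → Matrix (Fin r) (Fin D) ℂ)
    (Z : Fin d → Matrix (Fin D) (Fin l) ℂ)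
    (s s' : Fin r) (t t' : Fin l) :
    (doubled Y * doubled Z) (s, s') (t, t') =
      ((outGate Y Z)ᴴ * outGate Y Z) (s, t) (s', t') := by
  simp only [doubled, Matrix.sum_mul, Matrix.mul_sum, ← conj_kron_mul]
  rw [Finset.sum_comm]
  simp only [Matrix.sum_apply, kronecker_apply, map_apply]
  rw [Matrix.mul_apply, Fintype.sum_prod_type]
  rfl

/-- When `r l = d²` the gates are square. With `M = P† P`, unitarity of `U^{(2)} = P Q` gives
`M = (Q Q†)⁻¹`, and unitarity of `U^{(4)}` gives that `M ⊗ M` with shifted pairing is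
`(Q Q†)⁻¹ ⊗ (Q Q†)⁻¹`. Hence `M ⊗ M` is invariant under the exchange of legs. -/
theorem gram_exchange (P : Matrix (Fin d × Fin d) (Fin r × Fin l) ℂ)
    (Q : Matrix (Fin r × Fin l) (Fin d × Fin d) ℂ) (hrl : r * l = d ^ 2)
    (h2 : (P * Q)ᴴ * (P * Q) = 1)
    (h4 : ((P ⊗ₖ P) * (Q ⊗ₖ Q).submatrix (exch _ _ _ _) id)ᴴ *
      ((P ⊗ₖ P) * (Q ⊗ₖ Q).submatrix (exch _ _ _ _) id) = 1) :
    ((Pᴴ * P) ⊗ₖ (Pᴴ * P)).submatrix (exch (Fin r) (Fin l) (Fin r) (Fin l))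
      (exch (Fin r) (Fin l) (Fin r) (Fin l)) = (Pᴴ * P) ⊗ₖ (Pᴴ * P) := by
  set M := Pᴴ * P with hM
  have h2' : Qᴴ * M * Q = 1 := by
    rw [← h2, conjTranspose_mul, hM]; simp only [Matrix.mul_assoc]
  -- This is where squareness enters: a left inverse of `Q` is a right inverse.
  have hQ : Q * (Qᴴ * M) = 1 := by
    refine (mul_eq_one_comm_of_card_eq _ _ _ ?_).1 h2'
    simp [← hrl, ← sq]
  set R := Qᴴ * M with hR
  have hMR : M = Rᴴ * R := by
    have : Rᴴ * Qᴴ = 1 := by rw [← conjTranspose_mul, hQ, conjTranspose_one]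
    rw [hR, ← Matrix.mul_assoc, ← hR, this, Matrix.one_mul]
  have hQQ : (Q ⊗ₖ Q) * (R ⊗ₖ R) = 1 := by
    rw [← mul_kronecker_mul, hQ, one_kronecker_one]
  have hQQ' : (R ⊗ₖ R)ᴴ * (Q ⊗ₖ Q)ᴴ = 1 := by
    rw [← conjTranspose_mul, hQQ, conjTranspose_one]
  set e := exch (Fin r) (Fin l) (Fin r) (Fin l) with he
  have hee : ∀ x, e (e x) = x := fun _ => rfl
  have h5 : (Q ⊗ₖ Q)ᴴ * (M ⊗ₖ M).submatrix e e * (Q ⊗ₖ Q) = 1 := by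
    rw [← h4]
    have e1 : ((P ⊗ₖ P) * (Q ⊗ₖ Q).submatrix e id) = (P ⊗ₖ P).submatrix id e * (Q ⊗ₖ Q) := by
      rw [← submatrix_id_id (P ⊗ₖ P)]
      have := submatrix_mul_equiv ((P ⊗ₖ P)) ((Q ⊗ₖ Q).submatrix e id) id e id
      rw [submatrix_submatrix] at this
      have h : (e : _ → _) ∘ e = id := rfl
      rw [h] at this
      simpa using this.symm
    rw [e1, conjTranspose_mul, conjTranspose_submatrix, Matrix.mul_assoc, Matrix.mul_assoc]
    congr 1
    rw [← Matrix.mul_assoc]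
    congr 1
    rw [hM, mul_kronecker_mul, ← conjTranspose_kronecker]
    exact (submatrix_mul _ _ e id e Function.bijective_id)
  calc (M ⊗ₖ M).submatrix e e
      = ((R ⊗ₖ R)ᴴ * (Q ⊗ₖ Q)ᴴ) * (M ⊗ₖ M).submatrix e e * ((Q ⊗ₖ Q) * (R ⊗ₖ R)) := by
        rw [hQQ, hQQ', Matrix.one_mul, Matrix.mul_one]
    _ = (R ⊗ₖ R)ᴴ * ((Q ⊗ₖ Q)ᴴ * (M ⊗ₖ M).submatrix e e * (Q ⊗ₖ Q)) * (R ⊗ₖ R) := by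
        simp only [Matrix.mul_assoc]
    _ = M ⊗ₖ M := by
        rw [h5, Matrix.mul_one, conjTranspose_kronecker, ← mul_kronecker_mul, ← hMR]

/-- The exchange invariance of the Gram matrix `M` says that all `2 × 2` minors of its realignment
vanish. -/
theorem doubled_rankOne (Y : Fin d → Matrix (Fin r) (Fin D) ℂ)
    (Z : Fin d → Matrix (Fin D) (Fin l) ℂ)
    (Q : Matrix (Fin r × Fin l) (Fin d × Fin d) ℂ) (hd : 1 ≤ d) (hrl : r * l = d ^ 2)
    (h2 : (outGate Y Z * Q)ᴴ * (outGate Y Z * Q) = 1)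
    (h4 : ((outGate Y Z ⊗ₖ outGate Y Z) * (Q ⊗ₖ Q).submatrix (exch _ _ _ _) id)ᴴ *
      ((outGate Y Z ⊗ₖ outGate Y Z) * (Q ⊗ₖ Q).submatrix (exch _ _ _ _) id) = 1) :
    ∃ u v, doubled Y * doubled Z = vecMulVec u v := by
  have hex := gram_exchange (outGate Y Z) Q hrl h2 h4
  have hne : doubled Y * doubled Z ≠ 0 := by
    intro h0
    have hM : (outGate Y Z)ᴴ * outGate Y Z = 0 := by
      ext ⟨s, t⟩ ⟨s', t'⟩
      rw [← doubled_mul_apply, h0]; rfl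
    have : (1 : Matrix (Fin d × Fin d) (Fin d × Fin d) ℂ) = 0 := by
      rw [← h2, conjTranspose_mul, Matrix.mul_assoc, ← Matrix.mul_assoc (outGate Y Z)ᴴ, hM]
      simp
    have := congrFun (congrFun this (⟨0, hd⟩, ⟨0, hd⟩)) (⟨0, hd⟩, ⟨0, hd⟩)
    simp at this
  obtain ⟨p, q, hpq⟩ : ∃ p q, (doubled Y * doubled Z) p q ≠ 0 := by
    by_contra! h
    exact hne (by ext p q; exact h p q)
  refine ⟨fun x => (doubled Y * doubled Z) x q,
    fun y => (doubled Y * doubled Z) p y / (doubled Y * doubled Z) p q, ?_⟩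
  ext x y
  rw [vecMulVec_apply, mul_div_assoc', eq_div_iff hpq]
  have := congrFun (congrFun hex ((x.1, q.1), (p.1, y.1))) ((x.2, q.2), (p.2, y.2))
  simp only [submatrix_apply, exch, Equiv.coe_fn_mk, kronecker_apply, ← doubled_mul_apply] at this
  rw [← this, mul_comm]

theorem conj_kron_one {m n : Type*} [Fintype m] [Fintype n] [DecidableEq n]
    (G : Fin d → Matrix n m ℂ) (X : Fin d → Matrix m n ℂ) (h : ∑ i, G i * X i = 1) :
    ∑ i, ∑ j, ((G i).map (starRingEnd ℂ) ⊗ₖ G j) * ((X i).map (starRingEnd ℂ) ⊗ₖ X j) = 1 := by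
  simp only [← conj_kron_mul]
  ext ⟨s, s'⟩ ⟨t, t'⟩
  have h' : ∀ s t, ∑ i, (G i * X i) s t = (1 : Matrix n n ℂ) s t := fun s t => by
    rw [← h, Matrix.sum_apply]
  simp only [Matrix.sum_apply, kronecker_apply, map_apply, ← Finset.mul_sum, ← Finset.sum_mul,
    h', ← map_sum]
  simp only [one_apply, Prod.mk.injEq]
  by_cases h1 : s = t <;> by_cases h2 : s' = t' <;> simp [h1, h2]

/-- Left-invertible outer factors `X` and right-invertible outer factors `W` can be cancelled. -/
theorem strip {m n m' n' : Type*} [Fintype m] [Fintype n] [DecidableEq n]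
    [Fintype m'] [Fintype n'] [DecidableEq n']
    (G : Fin d → Matrix n m ℂ) (X : Fin d → Matrix m n ℂ) (h : ∑ i, G i * X i = 1)
    (W : Fin d → Matrix n' m' ℂ) (H : Fin d → Matrix m' n' ℂ) (h' : ∑ i, W i * H i = 1)
    (S S' : Matrix (n × n) (n' × n') ℂ)
    (hS : ∀ i j k l,
      ((X i).map (starRingEnd ℂ) ⊗ₖ X j) * S * ((W k).map (starRingEnd ℂ) ⊗ₖ W l) =
      ((X i).map (starRingEnd ℂ) ⊗ₖ X j) * S' * ((W k).map (starRingEnd ℂ) ⊗ₖ W l)) : S = S' := by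
  have key : ∀ S : Matrix (n × n) (n' × n') ℂ, S = ∑ k, ∑ l, ∑ i, ∑ j,
      ((G i).map (starRingEnd ℂ) ⊗ₖ G j) *
      (((X i).map (starRingEnd ℂ) ⊗ₖ X j) * S * ((W k).map (starRingEnd ℂ) ⊗ₖ W l)) *
      ((H k).map (starRingEnd ℂ) ⊗ₖ H l) := fun S => by
    conv_lhs => rw [← Matrix.one_mul S, ← Matrix.mul_one (1 * S), ← conj_kron_one G X h,
      ← conj_kron_one W H h']
    simp only [Matrix.sum_mul, Matrix.mul_sum, Matrix.mul_assoc]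
  rw [key S, key S']
  simp only [hS]

end Factored

/-! ### The fixed points of the canonical form -/

/-- The diagonal matrix with entries `ρ`, as a vector. -/
noncomputable def diagVec {D : ℕ} (ρ : Fin D → ℂ) : Fin D × Fin D → ℂ :=
  fun p => if p.1 = p.2 then ρ p.1 else 0

theorem doubled_mulVec_diagVec {d D : ℕ} {n : Type*} [Fintype n] (K : Fin d → Matrix n (Fin D) ℂ)
    (ρ : Fin D → ℂ) (s s' : n) :
    (doubled K *ᵥ diagVec ρ) (s, s') = (∑ m, K m * diagonal ρ * (K m)ᴴ) s' s := by
  rw [doubled, sum_mulVec, Finset.sum_apply, Matrix.sum_apply]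
  refine Finset.sum_congr rfl fun m _ => ?_
  rw [mulVec, dotProduct, Fintype.sum_prod_type, Matrix.mul_apply]
  refine Finset.sum_congr rfl fun β _ => ?_
  simp only [diagVec, kronecker_apply, mul_ite, mul_zero, Finset.sum_ite_eq, Finset.mem_univ,
    if_true, map_apply, mul_diagonal, conjTranspose_apply, starRingEnd_apply]
  ring

theorem diagVec_vecMul_doubled {d D : ℕ} {n : Type*} [Fintype n] (K : Fin d → Matrix (Fin D) n ℂ)
    (t t' : n) :
    (diagVec 1 ᵥ* doubled K) (t, t') = (∑ m, (K m)ᴴ * K m) t t' := by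
  rw [doubled, vecMul_sum, Finset.sum_apply, Matrix.sum_apply]
  refine Finset.sum_congr rfl fun m _ => ?_
  rw [vecMul, dotProduct, Fintype.sum_prod_type, Matrix.mul_apply]
  refine Finset.sum_congr rfl fun β _ => ?_
  simp [diagVec, conjTranspose_apply]

theorem sum_Tmat_diag {d D : ℕ} (A : Fin d → Fin d → Matrix (Fin D) (Fin D) ℂ) :
    ∑ k, Tmat d D A k k = ∑ k, doubled fun m => A m k := rfl

/-! ### The two inequalities between `r l` and `d²` -/

theorem le_rank_mul {d D r l : ℕ} (A : Fin d → Fin d → Matrix (Fin D) (Fin D) ℂ)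
    (h : (U2 A)ᴴ * U2 A = 1) (P : Matrix (Fin d × Fin d) (Fin r × Fin l) ℂ)
    (Q : Matrix (Fin r × Fin l) (Fin d × Fin d) ℂ) (hPQ : U2 A = P * Q) : d ^ 2 ≤ r * l := by
  have h1 : (1 : Matrix (Fin d × Fin d) (Fin d × Fin d) ℂ).rank ≤ r * l := by
    rw [← h]
    refine (rank_mul_le_right _ _).trans ?_
    rw [hPQ]
    refine (rank_mul_le_left _ _).trans ((rank_le_card_width _).trans ?_)
    simp
  simpa [rank_one, sq] using h1

theorem rank_mul_le_of_kronecker {d r l : ℕ} (P : Matrix (Fin d × Fin d) (Fin r × Fin l) ℂ)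
    (σ : Matrix (Fin r) (Fin r) ℂ) (τ : Matrix (Fin l) (Fin l) ℂ) (hσ : σ.PosDef) (hτ : τ.PosDef)
    (h : Pᴴ * P = σ ⊗ₖ τ) : r * l ≤ d ^ 2 := by
  have h1 := rank_of_isUnit _ (hσ.kronecker hτ).isUnit
  rw [← h] at h1
  have h2 := (rank_mul_le_right Pᴴ P).trans (rank_le_card_height P)
  rw [h1] at h2
  simpa [sq] using h2

/-- An MPO tensor in canonical form II generating an MPU is simple iff the product of its
two reshaping ranks equals `d²`. -/
theorem stmt7 (d D : ℕ) (hd : 1 ≤ d) (hD : 1 ≤ D)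
    (A : Fin d → Fin d → Matrix (Fin D) (Fin D) ℂ)
    (hMPU : ∀ N : ℕ, 2 ≤ N → mpoU d D A N ∈ Matrix.unitaryGroup (Fin N → Fin d) ℂ)
    (ρ : Fin D → ℝ) (hρpos : ∀ α, 0 < ρ α) (hρtr : ∑ α, ρ α = 1)
    (hCF1 : ∑ i : Fin d, ∑ j : Fin d, (A i j)ᴴ * A i j
      = (d : ℂ) • (1 : Matrix (Fin D) (Fin D) ℂ))
    (hCF2 : ∑ i : Fin d, ∑ j : Fin d,
        A i j * Matrix.diagonal (fun α => (ρ α : ℂ)) * (A i j)ᴴ =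
        (d : ℂ) • Matrix.diagonal (fun α => (ρ α : ℂ))) :
    Simple d D A ↔ (reshape1 d D A).rank * (reshape2 d D A).rank = d ^ 2 := by
  obtain ⟨X0, Y0, hXY0, ⟨G0, hG0⟩, ⟨V0, hV0⟩⟩ := exists_rank_factorization_s7 (reshape1 d D A)
  obtain ⟨Z0, W0, hZW0, ⟨F0, hF0⟩, ⟨H0, hH0⟩⟩ := exists_rank_factorization_s7 (reshape2 d D A)
  generalize (reshape1 d D A).rank = r at *
  generalize (reshape2 d D A).rank = l at *
  -- Slices of the two rank factorizations: `A^{ij} = X^j Y^i = Z^i W^j`.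
  let X : Fin d → Matrix (Fin D) (Fin r) ℂ := fun j => of fun α s => X0 (α, j) s
  let Y : Fin d → Matrix (Fin r) (Fin D) ℂ := fun i => of fun s β => Y0 s (i, β)
  let Z : Fin d → Matrix (Fin D) (Fin l) ℂ := fun i => of fun α t => Z0 (α, i) t
  let W : Fin d → Matrix (Fin l) (Fin D) ℂ := fun j => of fun t β => W0 t (j, β)
  let G : Fin d → Matrix (Fin r) (Fin D) ℂ := fun j => of fun s α => G0 s (α, j)
  let H : Fin d → Matrix (Fin D) (Fin l) ℂ := fun k => of fun β t => H0 (k, β) t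
  have hXY : ∀ i j, A i j = X j * Y i := fun i j => by
    ext α β
    exact congrFun (congrFun hXY0 (α, j)) (i, β)
  have hZW : ∀ i j, A i j = Z i * W j := fun i j => by
    ext α β
    exact congrFun (congrFun hZW0 (α, i)) (j, β)
  have hGX : ∑ j, G j * X j = 1 := by
    rw [← hG0]
    ext s s'
    simp only [Matrix.sum_apply, Matrix.mul_apply, Fintype.sum_prod_type]
    exact Finset.sum_comm
  have hWH : ∑ k, W k * H k = 1 := by
    rw [← hH0]
    ext s s'
    simp only [Matrix.sum_apply, Matrix.mul_apply, Fintype.sum_prod_type]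
    rfl
  let ρc : Fin D → ℂ := fun α => (ρ α : ℂ)
  have ha : diagVec 1 ᵥ* (∑ k, Tmat d D A k k) = (d : ℂ) • diagVec (1 : Fin D → ℂ) := by
    ext ⟨γ, γ'⟩
    rw [sum_Tmat_diag, vecMul_sum, Finset.sum_apply]
    simp only [diagVec_vecMul_doubled]
    rw [← Matrix.sum_apply, Finset.sum_comm, hCF1]
    simp [diagVec, one_apply]
  have hb : (∑ k, Tmat d D A k k) *ᵥ diagVec ρc = (d : ℂ) • diagVec ρc := by
    ext ⟨α, α'⟩
    rw [sum_Tmat_diag, sum_mulVec, Finset.sum_apply]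
    simp only [doubled_mulVec_diagVec]
    rw [← Matrix.sum_apply, Finset.sum_comm, hCF2]
    by_cases h : α = α'
    · simp [diagVec, h, ρc]
    · simp [diagVec, h, Ne.symm h]
  have hab : diagVec (1 : Fin D → ℂ) ⬝ᵥ diagVec ρc = 1 := by
    rw [dotProduct, Fintype.sum_prod_type]
    simp only [diagVec, mul_ite, mul_zero, Finset.sum_ite_eq, Finset.mem_univ, if_true,
      Pi.one_apply, one_mul, ρc]
    exact_mod_cast hρtr
  have hU2 := U2_isometry A (hMPU 2 le_rfl)
  have hU4 := U4_isometry A (hMPU 4 (by norm_num))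
  have hPQ := U2_eq A X Y Z W hXY hZW
  have hPQ4 := U4_eq A X Y Z W hXY hZW
  have hTT : ∀ i j k l, Tmat d D A i j * Tmat d D A k l =
      ((X i).map (starRingEnd ℂ) ⊗ₖ X j) * (doubled Y * doubled Z) *
        ((W k).map (starRingEnd ℂ) ⊗ₖ W l) := fun i j k l => by
    rw [Tmat_eq_left A X Y hXY i j, Tmat_eq_right A Z W hZW k l]
    simp only [Matrix.mul_assoc]
  constructor
  · rintro ⟨a', b', -, hab'⟩
    refine le_antisymm ?_ (le_rank_mul A hU2 _ _ hPQ)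
    have hT := rankOne_normalize hd (Tmat d D A) (diagVec 1) (diagVec ρc)
      (fun i j => Tmat d D A i j *ᵥ b') (fun k l => a' ᵥ* Tmat d D A k l) ha hb hab
      (fun i j k l => by rw [hab', mul_vecMulVec, vecMulVec_mul])
    have hS : doubled Y * doubled Z =
        vecMulVec (doubled Y *ᵥ diagVec ρc) (diagVec 1 ᵥ* doubled Z) := by
      refine strip G X hGX W H hWH _ _ fun i j k l => ?_
      rw [← hTT, hT, Tmat_eq_left A X Y hXY i j, Tmat_eq_right A Z W hZW k l, ← vecMulVec_mul,
        ← mul_vecMulVec]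
      simp only [Matrix.mul_assoc]
    -- The vectors in `hS` are the positive definite matrices `(Y (1 ⊗ ρ) Y†)ᵀ` and `Z† Z`.
    have hσ : (Y0 * diagonal (fun p : Fin d × Fin D => ρc p.2) * Y0ᴴ)ᵀ.PosDef := by
      refine PosDef.transpose (PosDef.mul_mul_conjTranspose_same (PosDef.diagonal fun p => ?_) ?_)
      · simpa [ρc] using hρpos p.2
      · exact Function.LeftInverse.injective (g := fun v => v ᵥ* V0) fun v => by
          simp [vecMul_vecMul, hV0]
    have hτ : (Z0ᴴ * Z0).PosDef := by
      refine PosDef.conjTranspose_mul_self _ ?_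
      exact Function.LeftInverse.injective (g := fun v => F0 *ᵥ v) fun v => by
          simp [mulVec_mulVec, hF0]
    refine rank_mul_le_of_kronecker (outGate Y Z) _ _ hσ hτ ?_
    ext ⟨s, t⟩ ⟨s', t'⟩
    rw [← doubled_mul_apply, hS, vecMulVec_apply, doubled_mulVec_diagVec, diagVec_vecMul_doubled,
      kronecker_apply, transpose_apply]
    congr 1
    · simp only [Matrix.sum_apply, Matrix.mul_apply (N := Y0ᴴ), Fintype.sum_prod_type]
      refine Finset.sum_congr rfl fun m _ => ?_
      rw [Matrix.mul_apply]
      refine Finset.sum_congr rfl fun β _ => ?_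
      simp [Y, mul_diagonal]
    · simp only [Matrix.sum_apply, Matrix.mul_apply, Fintype.sum_prod_type]
      exact Finset.sum_comm
  · intro hrl
    obtain ⟨u, v, huv⟩ := doubled_rankOne Y Z (inGate W X) hd hrl (by rw [← hPQ, hU2])
      (by rw [← hPQ4, hU4])
    refine simple_of_rankOne hd A hU2 (diagVec 1) (diagVec ρc)
      (fun i j => ((X i).map (starRingEnd ℂ) ⊗ₖ X j) *ᵥ u)
      (fun k l => v ᵥ* ((W k).map (starRingEnd ℂ) ⊗ₖ W l)) ha hb hab fun i j k l => ?_
    rw [hTT, huv, mul_vecMulVec, vecMulVec_mul]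
end

section
/- Let A be an MPO tensor generating an MPU. Then there exists R ≤ 4D⁴ such that for every N ≥ 2, every site position j ∈ {1,…,N}, and every d×d complex matrix O, the operator U^{(N)} · O_j · U^{(N)†} (where O_j denotes O acting on site j and the identity elsewhere) is supported on the set of sites at ring-distance at most R from j. In particular, every MPU is a one-dimensional quantum cellular automaton with a strict causal cone. -/
/-!
Put `M (a, b) = ∑ z, A a z ⊗ conj (A b z)`, matrices on the doubled bond space `V` of dimension
`m = D²`. Unitarity of all `U^{(N)}` says that the trace of a word of length at least two in the
`M (a, b)` is the product of the corresponding Kronecker deltas (`trace_word`).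

Let `T = M (a₀, a₀)` for some fixed `a₀`. Since `tr T ^ n = 1` for `n ≥ 2`, the power `T ^ k` with
`k = m + 1` is a rank-one idempotent, so that `T ^ k * x * T ^ k = tr (T ^ k * x) • T ^ k`
(`pow_idem`). Let `rad M` be the radical of the trace form on the algebra generated by the `M p`.
It contains every `M (a, b) - δ_{ab} • T` (`sub_mem_rad`). Its elements are nilpotent because all
their power traces vanish, so it is a nil ideal of a finite-dimensional algebra, hence nilpotent;
acting on `V`, the product of any `m` of its elements is zero (`step_card`).

Cut a word of length `m * k` into `m` blocks of length `k`. Modulo `rad M` each block is a scalar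
multiple of `T ^ k`; since `m` factors from `rad M` multiply to zero, the word lies in the two-sided
ideal generated by `T ^ k` (`long_word_mem`). An element `s` of `rad M` with such words on both
sides vanishes, because `tr (T ^ k * v * s * u) = 0` (`idealOf_mul_rad_mul_idealOf`). The matrix
elements of `U O_j U†` are traces of words in the `M p` with one arbitrary matrix at `j`, so any
site at ring distance more than `R = m * k = D² (D² + 1) ≤ 4 D⁴` from `j` contributes only its
identity part.
-/

open scoped Kronecker Matrix

/-- The graph distance between two sites on the ring `ℤ/N`. -/
def ringDist (N : ℕ) (j k : Fin N) : ℕ :=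
  min ((j.val + N - k.val) % N) ((k.val + N - j.val) % N)

/-- The single-site operator `O_j`: `O` acting on site `j` and the identity elsewhere. -/
noncomputable def siteOp (d N : ℕ) (j : Fin N) (O : Matrix (Fin d) (Fin d) ℂ) :
    Matrix (Fin N → Fin d) (Fin N → Fin d) ℂ :=
  Matrix.of fun x y =>
    O (x j) (y j) * ∏ k ∈ Finset.univ.erase j, (if x k = y k then (1 : ℂ) else 0)

/-- `W` is supported on the set of sites `S`: with respect to the factorization into the
sites in `S` and the rest, `W = W' ⊗ 1`. -/
def SupportedOn (d N : ℕ) (W : Matrix (Fin N → Fin d) (Fin N → Fin d) ℂ)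
    (S : Set (Fin N)) : Prop :=
  (∀ x y : Fin N → Fin d, (∃ k, k ∉ S ∧ x k ≠ y k) → W x y = 0) ∧
  (∀ x y x' y' : Fin N → Fin d, (∀ k ∈ S, x k = x' k) → (∀ k ∈ S, y k = y' k) →
    (∀ k, k ∉ S → x k = y k) → (∀ k, k ∉ S → x' k = y' k) → W x y = W x' y')

namespace MPUCone
open Polynomial

/-! ### Matrices with prescribed power traces -/

variable {ι : Type*} [Fintype ι] [DecidableEq ι]

/-- The Fitting idempotent of a matrix: a polynomial in `X₀`, divisible by `X₀ ^ k`, which projects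
onto the part of the space where `X₀` is invertible. -/
theorem exists_fitting (X₀ : Matrix ι ι ℂ) (k : ℕ) (hk : Fintype.card ι ≤ k) :
    ∃ a : ℂ[X], (X₀ ^ k * aeval X₀ a) * (X₀ ^ k * aeval X₀ a) = X₀ ^ k * aeval X₀ a ∧
      X₀ ^ k * (X₀ ^ k * aeval X₀ a) = X₀ ^ k := by
  have hp : X₀.charpoly ≠ 0 := X₀.charpoly_monic.ne_zero
  obtain ⟨q, hq, hnd⟩ := Polynomial.exists_eq_pow_rootMultiplicity_mul_and_not_dvd _ hp 0
  rw [map_zero, sub_zero] at hq hnd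
  set n := X₀.charpoly.rootMultiplicity 0
  have hn : n ≤ k := by
    refine le_trans ?_ hk
    rw [← X₀.charpoly_natDegree_eq_dim]
    simpa using Polynomial.natDegree_le_of_dvd (Dvd.intro q hq.symm) hp
  have hcop : IsCoprime ((X : ℂ[X]) ^ k) q :=
    IsCoprime.pow_left ((Polynomial.irreducible_X.coprime_iff_not_dvd).2 hnd)
  obtain ⟨a, b, hab⟩ := hcop
  have hzero : aeval X₀ (X ^ k * q : ℂ[X]) = 0 := by
    have : (X ^ k * q : ℂ[X]) = X ^ (k - n) * X₀.charpoly := by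
      rw [hq, ← mul_assoc, ← pow_add, Nat.sub_add_cancel hn]
    rw [this, map_mul, Matrix.aeval_self_charpoly, mul_zero]
  refine ⟨a, ?_, ?_⟩
  · have h : (X ^ k * a) * (X ^ k * a) = X ^ k * a - a * b * (X ^ k * q) := by
      linear_combination (X ^ k * a) * hab
    have := congrArg (aeval X₀) h
    rw [map_sub, map_mul _ (a * b), hzero] at this
    simpa using this
  · have h : X ^ k * (X ^ k * a) = X ^ k - b * (X ^ k * q) := by
      linear_combination (X ^ k) * hab
    have := congrArg (aeval X₀) h
    rw [map_sub, map_mul _ b, hzero] at this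
    simpa using this

theorem trace_pow_mul_aeval (Y : Matrix ι ι ℂ) (c : ℂ) (h : ∀ n, 2 ≤ n → (Y ^ n).trace = c)
    (k : ℕ) (hk : 2 ≤ k) (a : ℂ[X]) : (Y ^ k * aeval Y a).trace = c * a.eval 1 := by
  induction a using Polynomial.induction_on' with
  | add p q hp hq => rw [map_add, mul_add, Matrix.trace_add, hp, hq, eval_add, mul_add]
  | monomial n z =>
    rw [aeval_monomial, ← Algebra.smul_def, mul_smul_comm, ← pow_add, Matrix.trace_smul,
      h _ (by omega)]
    simp [mul_comm]

/-- The Fitting idempotent of `Y` has trace zero, hence is zero. The first power is not needed. -/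
theorem isNilpotent_of_trace_pow (Y : Matrix ι ι ℂ) (h : ∀ n, 2 ≤ n → (Y ^ n).trace = 0) :
    IsNilpotent Y := by
  obtain ⟨a, he, hk⟩ := exists_fitting Y (Fintype.card ι + 2) (by omega)
  have htr := trace_pow_mul_aeval Y 0 h (Fintype.card ι + 2) (by omega) a
  rw [zero_mul] at htr
  set e := Y ^ (Fintype.card ι + 2) * aeval Y a
  have hid : IsIdempotentElem (Matrix.toLin' e) := by
    rw [IsIdempotentElem, Module.End.mul_eq_comp, ← Matrix.toLin'_mul, he]
  have h0 : Matrix.toLin' e = 0 := by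
    apply LinearMap.IsIdempotentElem.eq_zero_of_trace_eq_zero hid
    rw [Matrix.trace_toLin'_eq]; exact htr
  have h0 : e = 0 := by simpa using h0
  exact ⟨_, by rw [← hk, h0, mul_zero]⟩

/-- An idempotent of trace one has rank one, so it is a product of a column and a row. -/
theorem idem_trace_one (e : Matrix ι ι ℂ) (he : e * e = e) (ht : e.trace = 1)
    (x : Matrix ι ι ℂ) : e * x * e = (e * x).trace • e := by
  have hid : IsIdempotentElem (Matrix.toLin' e) := by
    rw [IsIdempotentElem, Module.End.mul_eq_comp, ← Matrix.toLin'_mul, he]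
  have hf := (LinearMap.IsIdempotentElem.isProj_range _ hid).trace
  rw [Matrix.trace_toLin'_eq, ht] at hf
  have hf : Module.finrank ℂ (LinearMap.range (Matrix.toLin' e)) = 1 := by exact_mod_cast hf.symm
  obtain ⟨v, -, hv⟩ := finrank_eq_one_iff'.1 hf
  choose l hl using fun i : ι => hv ⟨Matrix.toLin' e (Pi.single i 1), LinearMap.mem_range_self _ _⟩
  have hE : e = Matrix.vecMulVec v.1 l := by
    ext i j
    have := congrFun (congrArg Subtype.val (hl j)) i
    simp at this
    rw [Matrix.vecMulVec_apply, ← this, mul_comm]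
  rw [hE, Matrix.vecMulVec_mul, Matrix.vecMulVec_mul_vecMulVec, Matrix.trace_vecMulVec]
  ext i j
  simp [Matrix.vecMulVec_apply, dotProduct_comm, mul_left_comm]

/-- If all power traces from the second on are `1`, then high powers of `T` are equal to its
Fitting idempotent, which has trace one. -/
theorem pow_idem (T : Matrix ι ι ℂ) (h : ∀ n, 2 ≤ n → (T ^ n).trace = 1) (k : ℕ)
    (hk : Fintype.card ι ≤ k) (hk2 : 2 ≤ k) (x : Matrix ι ι ℂ) :
    T ^ k * x * T ^ k = (T ^ k * x).trace • T ^ k := by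
  obtain ⟨a, he, hke⟩ := exists_fitting T k hk
  have ht := trace_pow_mul_aeval T 1 h k hk2 a
  have h1 : a.eval 1 = 1 := by
    have := trace_pow_mul_aeval T 1 h (k + k) (by omega) a
    rw [pow_add, mul_assoc, hke, h k hk2] at this
    simpa using this.symm
  rw [h1, mul_one] at ht
  have hTe : T ^ k = T ^ k * aeval T a := by
    have h2 := idem_trace_one _ he ht (T ^ k)
    have hc : (T ^ k * aeval T a) * T ^ k = T ^ k := by
      have hcomm : aeval T (a * X ^ k) = aeval T (X ^ k * a) := by rw [mul_comm]
      rw [map_mul, map_mul, map_pow, aeval_X] at hcomm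
      rw [mul_assoc, hcomm, hke]
    rw [hc, hke, h k hk2, one_smul] at h2
    exact h2
  rw [hTe]
  exact idem_trace_one _ he ht x

/-! ### The radical of the trace form is nilpotent -/

variable {P : Type*}

/-- The unital matrix algebra generated by the matrices `M p`. -/
def alg (M : P → Matrix ι ι ℂ) : Subalgebra ℂ (Matrix ι ι ℂ) := Algebra.adjoin ℂ (Set.range M)

/-- The radical of the trace form `(y, x) ↦ tr (y * x)` on the algebra `alg M`. -/
def rad (M : P → Matrix ι ι ℂ) : Submodule ℂ (Matrix ι ι ℂ) where
  carrier := {x | x ∈ alg M ∧ ∀ y ∈ alg M, (y * x).trace = 0}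
  add_mem' := fun ha hb => ⟨add_mem ha.1 hb.1, fun y hy => by
    rw [mul_add, Matrix.trace_add, ha.2 y hy, hb.2 y hy, add_zero]⟩
  zero_mem' := ⟨zero_mem _, fun y _ => by simp⟩
  smul_mem' := fun c x hx => ⟨Subalgebra.smul_mem _ hx.1 c, fun y hy => by
    rw [mul_smul_comm, Matrix.trace_smul, hx.2 y hy, smul_zero]⟩

theorem rad_le {M : P → Matrix ι ι ℂ} {x : Matrix ι ι ℂ} (hx : x ∈ rad M) : x ∈ alg M := hx.1

theorem trace_mul_rad {M : P → Matrix ι ι ℂ} {x y : Matrix ι ι ℂ} (hx : x ∈ rad M)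
    (hy : y ∈ alg M) : (y * x).trace = 0 := hx.2 y hy

theorem mem_alg (M : P → Matrix ι ι ℂ) (p : P) : M p ∈ alg M :=
  Algebra.subset_adjoin ⟨p, rfl⟩

theorem prod_mem_alg (M : P → Matrix ι ι ℂ) (l : List P) : (l.map M).prod ∈ alg M := by
  refine Subalgebra.list_prod_mem _ fun x hx => ?_
  obtain ⟨p, -, rfl⟩ := List.mem_map.1 hx
  exact mem_alg M p

/-- The algebra `alg M` is the linear span of the words in the generators. -/
theorem alg_induction {M : P → Matrix ι ι ℂ} {C : Matrix ι ι ℂ → Prop}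
    (hw : ∀ l : List P, C (l.map M).prod) (h0 : C 0) (hadd : ∀ x y, C x → C y → C (x + y))
    (hsmul : ∀ (c : ℂ) x, C x → C (c • x)) {x : Matrix ι ι ℂ} (hx : x ∈ alg M) : C x := by
  have hx' : x ∈ Submodule.span ℂ (Submonoid.closure (Set.range M) : Set (Matrix ι ι ℂ)) := by
    rw [← Algebra.adjoin_eq_span]; exact hx
  clear hx
  induction hx' using Submodule.span_induction with
  | zero => exact h0
  | add x y _ _ hx hy => exact hadd x y hx hy
  | smul c x _ hx => exact hsmul c x hx
  | mem x hx =>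
    obtain ⟨l, hl, rfl⟩ := Submonoid.exists_list_of_mem_closure hx
    obtain ⟨l', rfl⟩ : l ∈ Set.range (List.map M) := by
      rw [Set.range_list_map]; exact hl
    exact hw l'

theorem rad_mul_left {M : P → Matrix ι ι ℂ} {x z : Matrix ι ι ℂ} (hz : z ∈ alg M)
    (hx : x ∈ rad M) : z * x ∈ rad M :=
  ⟨mul_mem hz hx.1, fun y hy => by rw [← mul_assoc]; exact hx.2 _ (mul_mem hy hz)⟩

theorem rad_mul_right {M : P → Matrix ι ι ℂ} {x z : Matrix ι ι ℂ} (hz : z ∈ alg M)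
    (hx : x ∈ rad M) : x * z ∈ rad M :=
  ⟨mul_mem hx.1 hz, fun y hy => by
    rw [← mul_assoc, Matrix.trace_mul_comm, ← mul_assoc]; exact hx.2 _ (mul_mem hz hy)⟩

theorem isNilpotent_of_mem_rad {M : P → Matrix ι ι ℂ} {x : Matrix ι ι ℂ} (hx : x ∈ rad M) :
    IsNilpotent x := by
  refine isNilpotent_of_trace_pow x fun n hn => ?_
  obtain ⟨n, rfl⟩ := Nat.exists_eq_add_of_le' hn
  rw [pow_succ]
  exact hx.2 _ (pow_mem hx.1 _)

/-- The radical `rad M` lies in a nilpotent ideal of `alg M`: it is a nil left ideal of a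
finite-dimensional algebra, hence contained in the Jacobson radical. -/
theorem exists_ideal (M : P → Matrix ι ι ℂ) :
    ∃ (I : Ideal (alg M)) (n : ℕ), I ^ n = ⊥ ∧ ∀ x (hx : x ∈ rad M), (⟨x, rad_le hx⟩ : alg M) ∈ I := by
  have : IsArtinianRing (alg M) := IsArtinianRing.of_finite ℂ _
  obtain ⟨n, hn⟩ := IsArtinianRing.isNilpotent_jacobson_bot (R := alg M)
  refine ⟨_, n, hn, fun x hx => ?_⟩
  rw [Ideal.mem_jacobson_iff]
  intro y
  have hnil : IsNilpotent (y * ⟨x, rad_le hx⟩ : alg M) := by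
    obtain ⟨k, hk⟩ := isNilpotent_of_mem_rad (rad_mul_left y.2 hx)
    exact ⟨k, Subtype.ext (by simpa using hk)⟩
  obtain ⟨u, hu⟩ := hnil.isUnit_one_add
  refine ⟨(u⁻¹ : (alg M)ˣ), ?_⟩
  have : (u⁻¹ : (alg M)ˣ) * (1 + y * ⟨x, rad_le hx⟩ : alg M) = 1 := by rw [← hu, Units.inv_mul]
  rw [mul_add, mul_one, ← mul_assoc] at this
  rw [Ideal.mem_bot, sub_eq_zero, add_comm, this]

/-- The subspace `rad M • W` spanned by the vectors `x v` with `x ∈ rad M`, `v ∈ W`. -/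
def step (M : P → Matrix ι ι ℂ) (W : Submodule ℂ (ι → ℂ)) : Submodule ℂ (ι → ℂ) :=
  Submodule.span ℂ {u | ∃ x ∈ rad M, ∃ v ∈ W, u = x *ᵥ v}

theorem step_mono (M : P → Matrix ι ι ℂ) : Monotone (step M) := fun _ _ h =>
  Submodule.span_mono fun _ ⟨x, hx, v, hv, e⟩ => ⟨x, hx, v, h hv, e⟩

theorem exists_step_eq_bot (M : P → Matrix ι ι ℂ) : ∃ n, (step M)^[n] ⊤ = ⊥ := by
  obtain ⟨I, n, hn, hI⟩ := exists_ideal M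
  -- `I ^ i` kills the `k`-th term of the chain when `i + k = n`; the case `i = 0` is wanted.
  have key : ∀ k i, i + k = n → ∀ y ∈ I ^ i, ∀ v ∈ (step M)^[k] ⊤, y.1 *ᵥ v = 0 := by
    intro k
    induction k with
    | zero =>
      rintro i rfl y hy v -
      rw [add_zero] at hn
      rw [hn, Ideal.mem_bot] at hy
      simp [hy]
    | succ k ih =>
      intro i hi y hy v hv
      rw [Function.iterate_succ_apply'] at hv
      induction hv using Submodule.span_induction with
      | zero => simp
      | add a b _ _ ha hb => rw [Matrix.mulVec_add, ha, hb, add_zero]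
      | smul c a _ ha => rw [Matrix.mulVec_smul, ha, smul_zero]
      | mem u hu =>
        obtain ⟨x, hx, w, hw, rfl⟩ := hu
        rw [Matrix.mulVec_mulVec]
        have hyx : y * ⟨x, rad_le hx⟩ ∈ I ^ (i + 1) := by
          rw [Submodule.pow_succ]
          exact Ideal.mul_mem_mul hy (hI x hx)
        exact ih (i + 1) (by omega) _ hyx w hw
  refine ⟨n, (Submodule.eq_bot_iff _).2 fun v hv => ?_⟩
  simpa using key n 0 (zero_add n) 1 (by rw [Submodule.pow_zero]; simp) v hv

/-- The chain `V ⊇ rad M • V ⊇ …` drops in dimension until it vanishes, so `dim V` steps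
suffice. -/
theorem step_card (M : P → Matrix ι ι ℂ) : (step M)^[Fintype.card ι] ⊤ = ⊥ := by
  obtain ⟨n, hn⟩ := exists_step_eq_bot M
  have key : ∀ k, (step M)^[k] ⊤ = ⊥ ∨
      Module.finrank ℂ ((step M)^[k] ⊤ : Submodule ℂ (ι → ℂ)) + k ≤ Fintype.card ι := by
    intro k
    induction k with
    | zero => right; rw [Function.iterate_zero_apply, finrank_top]; simp
    | succ k ih =>
      have hle : (step M)^[k + 1] ⊤ ≤ (step M)^[k] ⊤ :=
        (step_mono M).antitone_iterate_of_map_le le_top k.le_succ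
      rcases ih with ih | ih
      · left; rw [ih] at hle; exact le_bot_iff.1 hle
      · rcases hle.lt_or_eq with hlt | heq
        · right
          have := Submodule.finrank_lt_finrank_of_lt hlt
          omega
        · left
          have hfix : ∀ j, (step M)^[j] ((step M)^[k] ⊤) = (step M)^[k] ⊤ := fun j =>
            Function.IsFixedPt.iterate (by
              rw [Function.IsFixedPt, ← Function.iterate_succ_apply' (step M)]; exact heq) j
          have h1 := hfix n
          rw [← Function.iterate_add_apply, add_comm, Function.iterate_add_apply, hn] at h1
          rw [heq, ← h1, ← le_bot_iff, ← hn, ← Function.iterate_add_apply, ]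
          exact (step_mono M).antitone_iterate_of_map_le le_top (by omega)
  rcases key (Fintype.card ι) with h | h
  · exact h
  · exact Submodule.finrank_eq_zero.1 (by omega)

/-! ### Words in a tensor that generates the identity -/

variable {M : P → Matrix ι ι ℂ} {t : P → ℂ}

theorem sub_mem_rad (h : ∀ l : List P, 2 ≤ l.length → ((l.map M).prod).trace = (l.map t).prod)
    (p₀ : P) (h₀ : t p₀ = 1) (p : P) : M p - t p • M p₀ ∈ rad M := by
  set x := M p - t p • M p₀ with hx
  have hxa : x ∈ alg M := sub_mem (mem_alg M p) (Subalgebra.smul_mem _ (mem_alg M p₀) _)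
  -- Against nonempty words the trace vanishes by hypothesis.
  have hw : ∀ (q : P) (l : List P), (M q * (l.map M).prod * x).trace = 0 := by
    intro q l
    have h1 := h (q :: l ++ [p]) (by simp)
    have h2 := h (q :: l ++ [p₀]) (by simp)
    simp only [List.map_append, List.map_cons, List.map_nil, List.prod_append, List.prod_cons,
      List.prod_nil, mul_one, h₀] at h1 h2
    rw [hx, mul_sub, mul_smul_comm, Matrix.trace_sub, Matrix.trace_smul, h1, h2, smul_eq_mul]
    ring
  have hq : ∀ (q : P) (y : Matrix ι ι ℂ), y ∈ alg M → (M q * y * x).trace = 0 := by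
    intro q y hy
    refine alg_induction (C := fun y => (M q * y * x).trace = 0) (hw q) (by simp) ?_ ?_ hy
    · intro a b ha hb
      rw [mul_add, add_mul, Matrix.trace_add, ha, hb, add_zero]
    · intro c a ha
      rw [mul_smul_comm, smul_mul_assoc, Matrix.trace_smul, ha, smul_zero]
  -- The empty word is covered by nilpotency of `x`, which only needs powers at least two.
  have hnil : IsNilpotent x := by
    refine isNilpotent_of_trace_pow x fun n hn => ?_
    obtain ⟨n, rfl⟩ := Nat.exists_eq_add_of_le' hn
    rw [pow_succ, pow_succ']
    nth_rewrite 1 [hx]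
    rw [sub_mul, sub_mul, smul_mul_assoc, smul_mul_assoc, Matrix.trace_sub, Matrix.trace_smul,
      hq p _ (pow_mem hxa n), hq p₀ _ (pow_mem hxa n), smul_zero, sub_zero]
  have h1 : x.trace = 0 := (Matrix.isNilpotent_trace_of_isNilpotent hnil).eq_zero
  refine ⟨hxa, fun y hy => ?_⟩
  refine alg_induction (C := fun y => (y * x).trace = 0) ?_ (by simp) ?_ ?_ hy
  · intro l
    cases l with
    | nil => simpa using h1
    | cons q l => simpa using hw q l
  · intro a b ha hb
    rw [add_mul, Matrix.trace_add, ha, hb, add_zero]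
  · intro c a ha
    rw [smul_mul_assoc, Matrix.trace_smul, ha, smul_zero]

theorem prod_sub_mem_rad
    (h : ∀ l : List P, 2 ≤ l.length → ((l.map M).prod).trace = (l.map t).prod)
    (p₀ : P) (h₀ : t p₀ = 1) (l : List P) :
    (l.map M).prod - (l.map t).prod • M p₀ ^ l.length ∈ rad M := by
  induction l with
  | nil => simp
  | cons p l ih =>
    have hp := rad_mul_right (prod_mem_alg M l) (sub_mem_rad h p₀ h₀ p)
    have hl := (rad M).smul_mem (t p) (rad_mul_left (mem_alg M p₀) ih)
    convert (rad M).add_mem hp hl using 1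
    simp only [List.map_cons, List.prod_cons, List.length_cons, pow_succ', sub_mul, mul_sub,
      smul_sub, smul_mul_assoc, mul_smul_comm, smul_smul]
    abel

/-- The two-sided ideal of `alg M` generated by `e`, as a subspace of matrices. -/
def idealOf (M : P → Matrix ι ι ℂ) (e : Matrix ι ι ℂ) : Submodule ℂ (Matrix ι ι ℂ) :=
  Submodule.span ℂ {z | ∃ u ∈ alg M, ∃ v ∈ alg M, z = u * e * v}

theorem mul_mem_idealOf {e x z : Matrix ι ι ℂ} (hx : x ∈ alg M) (hz : z ∈ idealOf M e) :
    x * z ∈ idealOf M e := by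
  induction hz using Submodule.span_induction with
  | zero => simp
  | add a b _ _ ha hb => rw [mul_add]; exact add_mem ha hb
  | smul c a _ ha => rw [mul_smul_comm]; exact Submodule.smul_mem _ c ha
  | mem z hz =>
    obtain ⟨u, hu, v, hv, rfl⟩ := hz
    exact Submodule.subset_span ⟨x * u, mul_mem hx hu, v, hv, by simp only [mul_assoc]⟩

/-- Modulo the ideal generated by `T ^ k`, where `T = M p₀`, a word containing `r` blocks of
length `k` maps into `rad M ^ r • V`: each block is a multiple of `T ^ k` plus an element of the
radical. -/
theorem long_word (h : ∀ l : List P, 2 ≤ l.length → ((l.map M).prod).trace = (l.map t).prod)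
    (p₀ : P) (h₀ : t p₀ = 1) (k r : ℕ) (l : List P) (hl : r * k ≤ l.length) :
    ∃ y z, (l.map M).prod = y + z ∧ (∀ v, y *ᵥ v ∈ (step M)^[r] ⊤) ∧
      z ∈ idealOf M (M p₀ ^ k) := by
  induction r generalizing l with
  | zero => exact ⟨_, 0, (add_zero _).symm, fun v => trivial, zero_mem _⟩
  | succ r ih =>
    have hlen : k ≤ l.length := by nlinarith
    obtain ⟨y, z, hyz, hy, hz⟩ := ih (l.drop k) (by
      rw [List.length_drop]; rw [add_mul, one_mul] at hl; omega)
    have hs := prod_sub_mem_rad h p₀ h₀ (l.take k)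
    rw [List.length_take_of_le hlen] at hs
    set s := ((l.take k).map M).prod - ((l.take k).map t).prod • M p₀ ^ k
    have hdrop : y + z ∈ alg M := hyz ▸ prod_mem_alg M _
    refine ⟨s * y, s * z + ((l.take k).map t).prod • (M p₀ ^ k * (y + z)), ?_, ?_, ?_⟩
    · rw [← List.take_append_drop k l, List.map_append, List.prod_append, hyz,
        List.take_append_drop, ← add_assoc, ← mul_add, ← smul_mul_assoc, ← add_mul]
      simp [s]
    · intro v
      rw [Function.iterate_succ_apply', ← Matrix.mulVec_mulVec]
      exact Submodule.subset_span ⟨s, hs, _, hy v, rfl⟩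
    · exact add_mem (mul_mem_idealOf (rad_le hs) hz) (Submodule.smul_mem _ _
        (Submodule.subset_span ⟨1, one_mem _, _, hdrop, by rw [one_mul]⟩))

theorem long_word_mem (h : ∀ l : List P, 2 ≤ l.length → ((l.map M).prod).trace = (l.map t).prod)
    (p₀ : P) (h₀ : t p₀ = 1) (k : ℕ) (l : List P) (hl : Fintype.card ι * k ≤ l.length) :
    (l.map M).prod ∈ idealOf M (M p₀ ^ k) := by
  obtain ⟨y, z, hyz, hy, hz⟩ := long_word h p₀ h₀ k _ l hl
  have : y = 0 := by
    refine Matrix.ext_of_mulVec_single fun i => ?_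
    have := hy (Pi.single i 1)
    rw [step_card, Submodule.mem_bot] at this
    rw [this, Matrix.zero_mulVec]
  rwa [hyz, this, zero_add]

/-- A radical element multiplied on both sides by the ideal generated by the rank-one idempotent
`T ^ k`, `T = M p₀`, vanishes. -/
theorem idealOf_mul_rad_mul_idealOf (p₀ : P) (h1 : ∀ n, 2 ≤ n → (M p₀ ^ n).trace = 1) (k : ℕ)
    (hk : Fintype.card ι ≤ k) (hk2 : 2 ≤ k) {a s b : Matrix ι ι ℂ}
    (ha : a ∈ idealOf M (M p₀ ^ k)) (hs : s ∈ rad M) (hb : b ∈ idealOf M (M p₀ ^ k)) :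
    a * s * b = 0 := by
  induction ha using Submodule.span_induction with
  | zero => simp
  | add a a' _ _ ha ha' => rw [add_mul, add_mul, ha, ha', add_zero]
  | smul c a _ ha => rw [smul_mul_assoc, smul_mul_assoc, ha, smul_zero]
  | mem a ha =>
    obtain ⟨u, hu, v, hv, rfl⟩ := ha
    induction hb using Submodule.span_induction with
    | zero => simp
    | add b b' _ _ hb hb' => rw [mul_add, hb, hb', add_zero]
    | smul c b _ hb => rw [mul_smul_comm, hb, smul_zero]
    | mem b hb =>
      obtain ⟨u', hu', v', hv', rfl⟩ := hb
      have hmid := pow_idem (M p₀) h1 k hk hk2 (v * s * u')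
      have htr : (M p₀ ^ k * (v * s * u')).trace = 0 :=
        trace_mul_rad (rad_mul_right hu' (rad_mul_left hv hs)) (pow_mem (mem_alg M p₀) k)
      rw [htr, zero_smul] at hmid
      calc u * M p₀ ^ k * v * s * (u' * M p₀ ^ k * v')
          = u * (M p₀ ^ k * (v * s * u') * M p₀ ^ k) * v' := by simp only [mul_assoc]
        _ = 0 := by rw [hmid, mul_zero, zero_mul]

theorem trace_prod_rotate (L : List (Matrix ι ι ℂ)) (n : ℕ) :
    (L.rotate n).prod.trace = L.prod.trace := by
  induction n generalizing L with
  | zero => simp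
  | succ n ih =>
    cases L with
    | nil => simp
    | cons a L => rw [List.rotate_cons_succ, ih, List.prod_append, List.prod_singleton,
        Matrix.trace_mul_comm, List.prod_cons]

/-- Here the matrix at position `0` is arbitrary, the one at position `q` is in the radical and all
others are generators. -/
theorem trace_ring_eq_zero
    (h : ∀ l : List P, 2 ≤ l.length → ((l.map M).prod).trace = (l.map t).prod)
    (p₀ : P) (h₀ : t p₀ = 1) (k : ℕ) (hk : Fintype.card ι ≤ k) (hk2 : 2 ≤ k)
    (L : List (Matrix ι ι ℂ)) (q : ℕ) (hq : Fintype.card ι * k < q)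
    (hqL : q + Fintype.card ι * k < L.length)
    (hM : ∀ i (hi : i < L.length), i ≠ 0 → i ≠ q → L[i] ∈ Set.range M)
    (hs : L[q] ∈ rad M) : L.prod.trace = 0 := by
  have h1 : ∀ n, 2 ≤ n → (M p₀ ^ n).trace = 1 := fun n hn => by
    simpa [h₀] using h (List.replicate n p₀) (by simpa using hn)
  have hword : ∀ L' : List (Matrix ι ι ℂ), (∀ x ∈ L', x ∈ Set.range M) →
      Fintype.card ι * k ≤ L'.length → L'.prod ∈ idealOf M (M p₀ ^ k) := by
    intro L' hL' hlen
    obtain ⟨l, rfl⟩ : L' ∈ Set.range (List.map M) := by rw [Set.range_list_map]; exact hL'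
    exact long_word_mem h p₀ h₀ k l (by simpa using hlen)
  have hsplit : L = L[0] :: ((L.drop 1).take (q - 1) ++ L[q] :: L.drop (q + 1)) := by
    have e1 : L = L[0] :: L.drop 1 := by
      simpa using List.drop_eq_getElem_cons (l := L) (i := 0) (by omega)
    have e2 : L[q] :: L.drop (q + 1) = (L.drop 1).drop (q - 1) := by
      rw [List.drop_drop, ← List.drop_eq_getElem_cons]
      congr 1; omega
    rw [e2, List.take_append_drop]; exact e1
  have hA := hword ((L.drop 1).take (q - 1)) (by
    intro x hx
    obtain ⟨i, hi, rfl⟩ := List.getElem_of_mem hx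
    simp only [List.length_take, List.length_drop] at hi
    simp only [List.getElem_take, List.getElem_drop]
    exact hM _ _ (by omega) (by omega)) (by simp; omega)
  have hB := hword (L.drop (q + 1)) (by
    intro x hx
    obtain ⟨i, hi, rfl⟩ := List.getElem_of_mem hx
    simp only [List.length_drop] at hi
    simp only [List.getElem_drop]
    exact hM _ _ (by omega) (by omega)) (by simp; omega)
  rw [hsplit, List.prod_cons, List.prod_append, List.prod_cons, ← mul_assoc (List.prod _),
    idealOf_mul_rad_mul_idealOf p₀ h1 k hk hk2 hA hs hB, mul_zero, Matrix.trace_zero]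

/-- On a ring with an arbitrary matrix at `j` and generators elsewhere, a radical element at a site
`s` far from `j` makes the trace vanish. -/
theorem trace_ofFn_eq_zero
    (h : ∀ l : List P, 2 ≤ l.length → ((l.map M).prod).trace = (l.map t).prod)
    (p₀ : P) (h₀ : t p₀ = 1) (k : ℕ) (hk : Fintype.card ι ≤ k) (hk2 : 2 ≤ k)
    {N : ℕ} (f : Fin N → Matrix ι ι ℂ) (j s : Fin N)
    (hq : Fintype.card ι * k < ringDist N j s)
    (hM : ∀ i, i ≠ j → i ≠ s → f i ∈ Set.range M) (hs : f s ∈ rad M) :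
    (List.ofFn f).prod.trace = 0 := by
  have hj := j.2
  have hsN := s.2
  have hN : 0 < N := by omega
  rw [← trace_prod_rotate _ j.val]
  -- `q` is the position of `s` after the rotation that brings `j` to the front
  set q := (s.val + N - j.val) % N with hqdef
  have hqN : q < N := Nat.mod_lt _ hN
  have hd : Fintype.card ι * k < q ∧ Fintype.card ι * k < (j.val + N - s.val) % N := by
    unfold ringDist at hq; omega
  have hpos : q + (j.val + N - s.val) % N = N := by
    have hne : q ≠ 0 := by omega
    rcases lt_trichotomy j.val s.val with hlt | heq | hlt
    · have e1 : q = s.val - j.val := by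
        rw [hqdef, show s.val + N - j.val = (s.val - j.val) + N by omega, Nat.add_mod_right,
          Nat.mod_eq_of_lt (by omega)]
      rw [Nat.mod_eq_of_lt (by omega)]; omega
    · rw [hqdef, heq] at hne; simp at hne
    · have e1 : q = s.val + N - j.val := by
        rw [hqdef, Nat.mod_eq_of_lt (by omega)]
      rw [show j.val + N - s.val = (j.val - s.val) + N by omega, Nat.add_mod_right,
          Nat.mod_eq_of_lt (by omega)]; omega
  have hqs : (q + j.val) % N = s.val := by
    rw [hqdef, Nat.mod_add_mod, Nat.sub_add_cancel (by omega), Nat.add_mod_right,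
      Nat.mod_eq_of_lt hsN]
  refine trace_ring_eq_zero h p₀ h₀ k hk hk2 _ q hd.1 (by simp; omega) ?_ ?_
  · intro i hi hi0 hiq
    simp only [List.length_rotate, List.length_ofFn] at hi
    simp only [List.getElem_rotate, List.length_ofFn, List.getElem_ofFn]
    have hinj : ∀ a b, a < N → b < N → (a + j.val) % N = (b + j.val) % N → a = b := by
      intro a b ha hb hab
      exact Nat.ModEq.eq_of_lt_of_lt (Nat.ModEq.add_right_cancel' _ hab) ha hb
    refine hM _ (fun e => hi0 (hinj i 0 hi hN ?_)) (fun e => hiq (hinj i q hi hqN ?_))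
    · rw [zero_add, Nat.mod_eq_of_lt hj]; exact congrArg Fin.val e
    · rw [hqs]; exact congrArg Fin.val e
  · simp only [List.getElem_rotate, List.length_ofFn, List.getElem_ofFn, hqs]
    exact hs

/-! ### The doubled tensor of a matrix product unitary -/

/-- The tensor of `U O U†` at a site carrying the operator `g`, as matrices on the doubled bond
space: `∑ g z w • A a z ⊗ conj (A b w)`. -/
noncomputable def site {d D : ℕ} (A : Fin d → Fin d → Matrix (Fin D) (Fin D) ℂ)
    (g : Matrix (Fin d) (Fin d) ℂ) (a b : Fin d) : Matrix (Fin D × Fin D) (Fin D × Fin D) ℂ :=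
  ∑ p : Fin d × Fin d, g p.1 p.2 • (A a p.1 ⊗ₖ (starRingEnd ℂ).mapMatrix (A b p.2))

theorem prod_ofFn_kronecker {D N : ℕ} (B C : Fin N → Matrix (Fin D) (Fin D) ℂ) :
    (List.ofFn fun k => B k ⊗ₖ C k).prod = (List.ofFn B).prod ⊗ₖ (List.ofFn C).prod := by
  induction N with
  | zero => simp
  | succ N ih =>
    rw [List.ofFn_succ, List.ofFn_succ, List.ofFn_succ, List.prod_cons, List.prod_cons,
      List.prod_cons, ih, Matrix.mul_kronecker_mul]

/-- Conjugating a product operator by `U` yields the matrix-product operator of the `site`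
tensors. -/
theorem conj_apply {d D N : ℕ} (A : Fin d → Fin d → Matrix (Fin D) (Fin D) ℂ)
    (g : Fin N → Matrix (Fin d) (Fin d) ℂ) (G : Matrix (Fin N → Fin d) (Fin N → Fin d) ℂ)
    (hG : ∀ z w, G z w = ∏ k, g k (z k) (w k)) (x y : Fin N → Fin d) :
    (mpoU d D A N * G * (mpoU d D A N)ᴴ) x y =
      (List.ofFn fun k => site A (g k) (x k) (y k)).prod.trace := by
  have hR : (List.ofFn fun k => site A (g k) (x k) (y k)).prod =
      ∑ r : Fin N → Fin d × Fin d, (∏ k, g k (r k).1 (r k).2) •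
        ((List.ofFn fun k => A (x k) (r k).1).prod ⊗ₖ
          (starRingEnd ℂ).mapMatrix (List.ofFn fun k => A (y k) (r k).2).prod) := by
    rw [← MultilinearMap.mkPiAlgebraFin_apply (R := ℂ)]
    unfold site
    rw [MultilinearMap.map_sum]
    refine Finset.sum_congr rfl fun r _ => ?_
    rw [MultilinearMap.map_smul_univ, MultilinearMap.mkPiAlgebraFin_apply, prod_ofFn_kronecker,
      map_list_prod, List.map_ofFn]
    rfl
  rw [hR, Matrix.trace_sum, ← (Equiv.arrowProdEquivProdArrow _ _ _).symm.sum_comp,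
    Fintype.sum_prod_type_right, Matrix.mul_apply]
  refine Finset.sum_congr rfl fun w _ => ?_
  rw [Matrix.mul_apply, Finset.sum_mul]
  refine Finset.sum_congr rfl fun z _ => ?_
  rw [Matrix.trace_smul, Matrix.trace_kronecker, hG, Matrix.conjTranspose_apply, smul_eq_mul]
  have hstar : ∀ B : Matrix (Fin D) (Fin D) ℂ,
      ((starRingEnd ℂ).mapMatrix B).trace = star B.trace := by
    intro B; simp [Matrix.trace]
  rw [hstar]
  simp only [mpoU, Matrix.of_apply, Equiv.arrowProdEquivProdArrow_symm_apply]
  ring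

theorem siteOp_eq_prod {d N : ℕ} (j : Fin N) (O : Matrix (Fin d) (Fin d) ℂ)
    (x y : Fin N → Fin d) :
    siteOp d N j O x y = ∏ k, (Function.update (fun _ => 1) j O : Fin N → Matrix _ _ ℂ) k
      (x k) (y k) := by
  rw [← Finset.mul_prod_erase _ _ (Finset.mem_univ j), Function.update_self, siteOp,
    Matrix.of_apply]
  congr 1
  refine Finset.prod_congr rfl fun k hk => ?_
  rw [Function.update_of_ne (Finset.ne_of_mem_erase hk), Matrix.one_apply]

theorem one_eq_prod {d N : ℕ} (x y : Fin N → Fin d) :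
    (1 : Matrix (Fin N → Fin d) (Fin N → Fin d) ℂ) x y =
      ∏ k, (1 : Matrix (Fin d) (Fin d) ℂ) (x k) (y k) := by
  simp only [Matrix.one_apply]
  rw [Finset.prod_ite_zero]
  simp [funext_iff]

/-- Unitarity says that the doubled tensor generates the identity on every ring of length at
least two. -/
theorem trace_word {d D : ℕ} (A : Fin d → Fin d → Matrix (Fin D) (Fin D) ℂ)
    (hMPU : ∀ N : ℕ, 2 ≤ N → mpoU d D A N ∈ Matrix.unitaryGroup (Fin N → Fin d) ℂ)
    (l : List (Fin d × Fin d)) (hl : 2 ≤ l.length) :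
    ((l.map fun p => site A 1 p.1 p.2).prod).trace =
      (l.map fun p => (1 : Matrix (Fin d) (Fin d) ℂ) p.1 p.2).prod := by
  have hU := Matrix.mem_unitaryGroup_iff.1 (hMPU _ hl)
  have hc := conj_apply A (fun _ : Fin l.length => 1) 1 one_eq_prod (fun k => (l.get k).1)
    (fun k => (l.get k).2)
  rw [mul_one, ← Matrix.star_eq_conjTranspose, hU, one_eq_prod, ← List.prod_ofFn] at hc
  have hofFn : ∀ {β : Type} (F : Fin d × Fin d → β),
      List.ofFn (fun k => F (l.get k)) = l.map F := by
    intro β F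
    conv_rhs => rw [← List.ofFn_get l, List.map_ofFn]
    rfl
  rw [hofFn (fun p => site A 1 p.1 p.2),
    hofFn (fun p => (1 : Matrix (Fin d) (Fin d) ℂ) p.1 p.2)] at hc
  exact hc.symm

end MPUCone

/-- Every MPU is a quantum cellular automaton with a strict causal cone: there is an
`R ≤ 4D⁴` such that for every ring size `N ≥ 2`, site `j` and single-site operator `O`,
the operator `U^{(N)} O_j U^{(N)†}` is supported on the sites at ring-distance at most `R`
from `j`. -/
theorem stmt8 (d D : ℕ) (hd : 1 ≤ d) (hD : 1 ≤ D)
    (A : Fin d → Fin d → Matrix (Fin D) (Fin D) ℂ)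
    (hMPU : ∀ N : ℕ, 2 ≤ N → mpoU d D A N ∈ Matrix.unitaryGroup (Fin N → Fin d) ℂ) :
    ∃ R : ℕ, R ≤ 4 * D ^ 4 ∧
      ∀ N : ℕ, 2 ≤ N → ∀ j : Fin N, ∀ O : Matrix (Fin d) (Fin d) ℂ,
        SupportedOn d N (mpoU d D A N * siteOp d N j O * (mpoU d D A N)ᴴ)
          {k : Fin N | ringDist N j k ≤ R} := by
  classical
  have ht := MPUCone.trace_word A hMPU
  let p₀ : Fin d × Fin d := (⟨0, hd⟩, ⟨0, hd⟩)
  have h₀ : (1 : Matrix (Fin d) (Fin d) ℂ) p₀.1 p₀.2 = 1 := Matrix.one_apply_eq _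
  have hrad := MPUCone.sub_mem_rad ht p₀ h₀
  have hcard : Fintype.card (Fin D × Fin D) = D * D := by simp
  have hDD : 1 ≤ D * D := Nat.mul_pos hD hD
  refine ⟨D * D * (D * D + 1), by nlinarith, fun N hN j O => ?_⟩
  set W := mpoU d D A N * siteOp d N j O * (mpoU d D A N)ᴴ with hW
  set g : Fin N → Matrix (Fin d) (Fin d) ℂ := Function.update (fun _ => 1) j O with hg
  have hWap : ∀ x y, W x y = (List.ofFn fun k => MPUCone.site A (g k) (x k) (y k)).prod.trace :=
    MPUCone.conj_apply A g _ (MPUCone.siteOp_eq_prod j O)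
  have hgne : ∀ k, k ≠ j → g k = 1 := fun k hk => Function.update_of_ne hk _ _
  have hself : ringDist N j j = 0 := by
    unfold ringDist; rw [Nat.add_sub_cancel_left, Nat.mod_self, min_self]
  have hfar : ∀ s : Fin N, s ∉ {k : Fin N | ringDist N j k ≤ D * D * (D * D + 1)} →
      s ≠ j ∧ ∀ f : Fin N → Matrix (Fin D × Fin D) (Fin D × Fin D) ℂ,
        (∀ i, i ≠ j → i ≠ s → f i ∈ Set.range fun p : Fin d × Fin d => MPUCone.site A 1 p.1 p.2) →
        f s ∈ MPUCone.rad (fun p : Fin d × Fin d => MPUCone.site A 1 p.1 p.2) →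
        (List.ofFn f).prod.trace = 0 := by
    intro s hs
    rw [Set.mem_ofPred_eq, not_le] at hs
    refine ⟨?_, fun f hf hfs => ?_⟩
    · rintro rfl
      omega
    · exact MPUCone.trace_ofFn_eq_zero ht p₀ h₀ (D * D + 1) (by omega) (by omega) f j s
        (by rwa [hcard]) hf hfs
  have hrange : ∀ (x y : Fin N → Fin d) (i : Fin N), i ≠ j →
      MPUCone.site A (g i) (x i) (y i) ∈
        Set.range fun p : Fin d × Fin d => MPUCone.site A 1 p.1 p.2 := fun x y i hi =>
    ⟨(x i, y i), by rw [hgne i hi]⟩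
  refine ⟨?_, ?_⟩
  · rintro x y ⟨s, hs, hxy⟩
    obtain ⟨hsj, hz⟩ := hfar s hs
    rw [hWap]
    refine hz _ (fun i hi _ => hrange x y i hi) ?_
    have := hrad (x s, y s)
    rw [Matrix.one_apply_ne hxy, zero_smul, sub_zero] at this
    rwa [hgne s hsj]
  · -- Sites outside the cone can be changed one at a time.
    have hone : ∀ (x y : Fin N → Fin d) (s : Fin N) (c : Fin d),
        s ∉ {k : Fin N | ringDist N j k ≤ D * D * (D * D + 1)} → x s = y s →
        W (Function.update x s c) (Function.update y s c) = W x y := by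
      intro x y s c hs hxy
      obtain ⟨hsj, hz⟩ := hfar s hs
      set f := fun k => MPUCone.site A (g k) (x k) (y k) with hf
      have hupd : (fun k => MPUCone.site A (g k) (Function.update x s c k)
          (Function.update y s c k)) = Function.update f s (MPUCone.site A 1 c c) := by
        funext k
        rcases eq_or_ne k s with rfl | hk
        · simp [hgne k hsj]
        · simp [hk, hf]
      have hzero := hz (Function.update f s (MPUCone.site A 1 c c - f s)) (by
        intro i hi his
        rw [Function.update_of_ne his]
        exact hrange x y i hi) (by
        rw [Function.update_self]
        have h1 := hrad (c, c)
        have h2 := hrad (x s, y s)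
        rw [Matrix.one_apply_eq] at h1
        rw [hxy, Matrix.one_apply_eq] at h2
        have h3 := sub_mem h1 h2
        rw [sub_sub_sub_cancel_right] at h3
        simpa only [hf, hgne s hsj, hxy] using h3)
      rw [← MultilinearMap.mkPiAlgebraFin_apply (R := ℂ), MultilinearMap.map_update_sub,
        Function.update_eq_self, Matrix.trace_sub, sub_eq_zero,
        MultilinearMap.mkPiAlgebraFin_apply, MultilinearMap.mkPiAlgebraFin_apply] at hzero
      rw [hWap, hWap, hupd, hzero]
    intro x y x' y' hx hy hxy hxy'
    have hmany : ∀ F : Finset (Fin N),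
        (∀ s ∈ F, s ∉ {k : Fin N | ringDist N j k ≤ D * D * (D * D + 1)}) →
        W (F.piecewise x' x) (F.piecewise y' y) = W x y := by
      intro F
      induction F using Finset.induction_on with
      | empty => intro _; simp
      | insert s F hsF ih =>
        intro hF
        have hs := hF s (Finset.mem_insert_self s F)
        rw [Finset.piecewise_insert, Finset.piecewise_insert, hxy' s hs,
          hone _ _ s _ hs (by simp [hsF, hxy s hs])]
        exact ih fun i hi => hF i (Finset.mem_insert_of_mem hi)
    have := hmany (Finset.univ.filter
      (· ∉ {k : Fin N | ringDist N j k ≤ D * D * (D * D + 1)})) (by simp)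
    rw [← this]
    congr 1 <;> funext k <;> by_cases hk : ringDist N j k ≤ D * D * (D * D + 1)
    · simp [Finset.piecewise, hx k hk]
    · simp [Finset.piecewise, hk]
    · simp [Finset.piecewise, hy k hk]
    · simp [Finset.piecewise, hk]
end

section
/- Let x be an n×n complex unitary matrix satisfying x = xᵀ or x = −xᵀ. Then there exist a symmetric unitary matrix S (S unitary with S = Sᵀ) and a real n×n matrix Λ with det(Λ) = 1 such that x = Sᵀ Λ S, where Λ is symmetric if x = xᵀ and skew-symmetric if x = −xᵀ. -/
/-!
The decomposition comes from taking roots inside the algebra generated by a matrix. The spectrum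
of a unitary `y` is a finite subset of the unit circle, so Lagrange interpolation gives a
polynomial `p` for which `p(y)` is unitary and `p(y) ^ k = y` (`exists_unitary_root`). Being a
polynomial in `y`, the root is symmetric as soon as `y` is, and commutes with all that commutes
with `y`.

If `x` is symmetric, take `S` with `S ^ 2 = x` and `Λ = 1`.

If `x` is skew-symmetric, then `-x ^ 2` is a symmetric unitary; take `S` to be a fourth root of it,
and `Λ = S⁻¹ x S⁻¹`. Since `S` commutes with `x`, `Λ` is a skew-symmetric unitary with
`Λ ^ 2 = S⁻⁴ x ^ 2 = -1`. Hence `Λ⁻¹ = -Λ = Λᵀ`, and comparison with `Λ⁻¹ = Λᴴ` shows that `Λ` is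
real. Finally `(1 + Λ) ^ 2 = 2 Λ` forces `det Λ ≥ 0`, while `|det Λ| = 1`
(`det_eq_one_of_sq_eq_neg_one`).
-/

open scoped Matrix

open scoped Matrix.Norms.L2Operator in
open Polynomial in
/-- A unitary matrix has unitary `k`-th roots that are polynomials in it. The L2 operator norm
serves only to make the continuous functional calculus available. -/
lemma exists_unitary_root {n : ℕ} {y : Matrix (Fin n) (Fin n) ℂ}
    (hy : y ∈ Matrix.unitaryGroup (Fin n) ℂ) {k : ℕ} (hk : 0 < k) :
    ∃ p : ℂ[X], aeval y p ∈ Matrix.unitaryGroup (Fin n) ℂ ∧ aeval y p ^ k = y := by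
  classical
  have hfin : (spectrum ℂ y).Finite := Matrix.finite_spectrum y
  have hn : IsStarNormal y := ⟨by
    rw [commute_iff_eq, Matrix.mem_unitaryGroup_iff.1 hy, Matrix.mem_unitaryGroup_iff'.1 hy]⟩
  choose r hr using fun z : ℂ => IsAlgClosed.exists_pow_nat_eq z hk
  let p : ℂ[X] := Lagrange.interpolate hfin.toFinset id r
  have hp : ∀ z ∈ spectrum ℂ y, p.eval z = r z := fun z hz =>
    Lagrange.eval_interpolate_at_node r Function.injective_id.injOn (hfin.mem_toFinset.2 hz)
  refine ⟨p, ?_, ?_⟩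
  · have hcfc : aeval y p = cfc (fun z => p.eval z) y := (cfc_polynomial p y).symm
    rw [hcfc]
    refine (cfc_unitary_iff _ y hn (hfin.continuousOn _)).2 fun z hz => ?_
    have hz1 : ‖z‖ = 1 := by
      simpa using spectrum.subset_circle_of_unitary hy hz
    have hr1 : ‖r z‖ = 1 := by
      rw [← pow_eq_one_iff_of_nonneg (norm_nonneg _) hk.ne', ← norm_pow, hr, hz1]
    simp only [hp z hz]
    rw [Complex.star_def, Complex.conj_mul', hr1]
    norm_num
  · calc aeval y p ^ k = aeval y (p ^ k) := (map_pow _ _ _).symm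
      _ = cfc (fun z => (p ^ k).eval z) y := (cfc_polynomial _ y).symm
      _ = cfc (fun z => z) y := cfc_congr fun z hz => by simp [hp z hz, hr]
      _ = y := cfc_id' ℂ y

lemma transpose_aeval_of_symm {n : ℕ} {y : Matrix (Fin n) (Fin n) ℂ} (hy : yᵀ = y)
    (p : Polynomial ℂ) : (Polynomial.aeval y p)ᵀ = Polynomial.aeval y p := by
  simp [Polynomial.aeval_eq_sum_range, Matrix.transpose_sum, Matrix.transpose_smul,
    Matrix.transpose_pow, hy]

/-- The determinant is nonnegative because `(1 + A) ^ 2 = 2 A`, and its square is `±1`. -/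
lemma det_eq_one_of_sq_eq_neg_one {n : ℕ} (A : Matrix (Fin n) (Fin n) ℝ) (hA : A * A = -1) :
    A.det = 1 := by
  have h1 : (1 + A) * (1 + A) = (2 : ℝ) • A := by
    rw [mul_add, add_mul, add_mul, hA, two_smul, mul_one, one_mul, mul_one]
    abel
  have h2 : (1 + A).det * (1 + A).det = 2 ^ n * A.det := by
    rw [← Matrix.det_mul, h1, Matrix.det_smul, Fintype.card_fin]
  have h3 : 0 ≤ A.det := by
    have h4 : 0 ≤ 2 ^ n * A.det := h2 ▸ mul_self_nonneg _
    exact nonneg_of_mul_nonneg_right h4 (by positivity)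
  have h5 : A.det * A.det = (-1) ^ n := by
    rw [← Matrix.det_mul, hA, Matrix.det_neg]
    simp
  have h6 : A.det * A.det = 1 := by
    rcases neg_one_pow_eq_or ℝ n with h | h
    · rw [h5, h]
    · nlinarith [mul_self_nonneg A.det]
  nlinarith

/-- Every symmetric or skew-symmetric unitary matrix `x` can be written as `x = Sᵀ Λ S`
with `S` a symmetric unitary and `Λ` real with `det Λ = 1`, where `Λ` is symmetric if
`x = xᵀ` and skew-symmetric if `x = -xᵀ`. -/
theorem stmt9 (n : ℕ) (x : Matrix (Fin n) (Fin n) ℂ)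
    (hx : x ∈ Matrix.unitaryGroup (Fin n) ℂ)
    (hsym : x = xᵀ ∨ x = -xᵀ) :
    ∃ S Λ : Matrix (Fin n) (Fin n) ℂ,
      S ∈ Matrix.unitaryGroup (Fin n) ℂ ∧ S = Sᵀ ∧
      (∀ i j, (Λ i j).im = 0) ∧ Λ.det = 1 ∧
      x = Sᵀ * Λ * S ∧
      (x = xᵀ → Λ = Λᵀ) ∧ (x = -xᵀ → Λ = -Λᵀ) := by
  rcases hsym with hs | hs
  · obtain ⟨p, hpu, hp⟩ := exists_unitary_root hx (k := 2) two_pos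
    have hpt := transpose_aeval_of_symm hs.symm p
    refine ⟨Polynomial.aeval x p, 1, hpu, hpt.symm, ?_, Matrix.det_one, ?_, by simp, ?_⟩
    · intro i j
      rw [Matrix.one_apply]
      split_ifs <;> simp
    · rw [hpt, mul_one, ← sq, hp]
    · -- `x` is both symmetric and skew-symmetric, hence zero; as it is unitary, `1 = 0`.
      intro h
      have h0 : x = 0 := by
        rw [← hs] at h
        ext i j
        exact self_eq_neg.1 (congrFun (congrFun h i) j)
      have h1 := Matrix.mem_unitaryGroup_iff.1 hx
      rw [h0, zero_mul] at h1
      rw [← h1]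
      simp
  · have hxt : xᵀ = -x := (neg_eq_iff_eq_neg.2 hs).symm
    have hx1 : x * star x = 1 := Matrix.mem_unitaryGroup_iff.1 hx
    have hx2 : star x * x = 1 := Matrix.mem_unitaryGroup_iff'.1 hx
    have hyu : -(x * x) ∈ Matrix.unitaryGroup (Fin n) ℂ := by
      rw [Matrix.mem_unitaryGroup_iff, star_neg, neg_mul_neg, star_mul, mul_assoc,
        ← mul_assoc x (star x), hx1, one_mul, hx1]
    have hyt : (-(x * x))ᵀ = -(x * x) := by
      rw [Matrix.transpose_neg, Matrix.transpose_mul, hxt, neg_mul_neg]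
    obtain ⟨p, hpu, hp⟩ := exists_unitary_root hyu (k := 4) (by norm_num)
    have hpt := transpose_aeval_of_symm hyt p
    have hcomm : Commute (Polynomial.aeval (-(x * x)) p) x := by
      have hc : Commute x (-(x * x)) := ((Commute.refl x).mul_right (Commute.refl x)).neg_right
      rw [Polynomial.aeval_eq_sum_range]
      exact Commute.sum_left _ _ _ fun i _ => (hc.symm.pow_left i).smul_left _
    generalize Polynomial.aeval (-(x * x)) p = S at hpu hp hpt hcomm
    have hS1 : S * star S = 1 := Matrix.mem_unitaryGroup_iff.1 hpu
    have hS2 : star S * S = 1 := Matrix.mem_unitaryGroup_iff'.1 hpu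
    have hTt : (star S)ᵀ = star S := by
      nth_rewrite 2 [← hpt]
      rfl
    have hTx : star S * x = x * star S := by
      calc star S * x = star S * (x * S) * star S := by
            rw [mul_assoc, mul_assoc, hS1, mul_one]
        _ = x * star S := by rw [← hcomm.eq, ← mul_assoc, hS2, one_mul]
    have hΛu : star S * x * star S ∈ Matrix.unitaryGroup (Fin n) ℂ :=
      mul_mem (mul_mem (Unitary.star_mem hpu) hx) (Unitary.star_mem hpu)
    have hxΛ : x = Sᵀ * (star S * x * star S) * S := by
      rw [hpt, mul_assoc, mul_assoc (star S * x), hS2, mul_one, ← mul_assoc, hS1, one_mul]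
    have hΛt : (star S * x * star S)ᵀ = -(star S * x * star S) := by
      rw [Matrix.transpose_mul, Matrix.transpose_mul, hTt, hxt]
      noncomm_ring
    have hΛsq : (star S * x * star S) * (star S * x * star S) = -1 := by
      have hc : Commute (star S) x := hTx
      calc (star S * x * star S) * (star S * x * star S)
          = (x * x) * star S ^ 4 := by
            rw [hTx, mul_assoc x, mul_assoc x, ← sq, ← mul_assoc (star S ^ 2),
              (hc.pow_left 2).eq, mul_assoc x (star S ^ 2), ← pow_add, ← mul_assoc]
        _ = -(S ^ 4 * star S ^ 4) := by rw [hp]; simp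
        _ = -1 := by
            have hSc : Commute S (star S) := hS1.trans hS2.symm
            rw [← hSc.mul_pow, hS1, one_pow]
    generalize star S * x * star S = Λ at hΛu hxΛ hΛt hΛsq
    have hΛstar : star Λ = Λᵀ := by
      have h := Matrix.mem_unitaryGroup_iff'.1 hΛu
      rw [hΛt]
      calc star Λ = -(star Λ * (Λ * Λ)) := by rw [hΛsq]; simp
        _ = -Λ := by rw [← mul_assoc, h, one_mul]
    have hreal : ∀ i j, (Λ i j).im = 0 := fun i j =>
      Complex.conj_eq_iff_im.1 (congrFun (congrFun hΛstar j) i)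
    have hmap : (Λ.map Complex.re).map Complex.ofRealHom = Λ := by
      ext i j
      exact Complex.ext (by simp) (by simp [hreal i j])
    have hdet : Λ.det = 1 := by
      have hA : Λ.map Complex.re * Λ.map Complex.re = -1 := by
        apply Matrix.map_injective Complex.ofReal_injective
        change ((Λ.map Complex.re * Λ.map Complex.re).map Complex.ofRealHom)
          = (-1 : Matrix (Fin n) (Fin n) ℝ).map Complex.ofRealHom
        rw [Matrix.map_mul, hmap, hΛsq]
        ext i j
        simp [Matrix.one_apply, apply_ite]
      rw [← hmap, ← RingHom.mapMatrix_apply, ← RingHom.map_det, det_eq_one_of_sq_eq_neg_one _ hA,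
        map_one]
    refine ⟨S, Λ, hpu, hpt.symm, hreal, hdet, hxΛ, fun h => ?_, fun _ => by rw [hΛt, neg_neg]⟩
    -- `x` is both symmetric and skew-symmetric, hence zero; as it is unitary, `1 = 0`, so `Λ = 0`.
    have h0 : x = 0 := by
      rw [hxt] at h
      ext i j
      exact self_eq_neg.1 (congrFun (congrFun h i) j)
    rw [h0, zero_mul] at hx1
    have hz : Λ = 0 := by rw [← mul_one Λ, ← hx1, mul_zero]
    rw [hz, Matrix.transpose_zero]
end

section
/- Let x be an n×n complex unitary matrix with x = −xᵀ. Then n is even and there exists an n×n unitary matrix U such that x = Uᵀ Σ_n U, where Σ_n = 1_{n/2} ⊗ Y is the standard skew-symmetric form. -/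
/-!
A skew-symmetric unitary `x` defines a quaternionic structure on `ℂⁿ`: the antilinear map
`J v = conj (x v)` satisfies `J² = -1`, and `⟨a, J b⟩ = conj (aᵀ x b)` is skew in `a, b`
(`antiJ_antiJ`, `inner_antiJ`), so that also `⟨J a, J b⟩ = ⟨b, a⟩`. In particular `J a` is
orthogonal to `a`.

The size is even because `det x = det (-xᵀ) = (-1)ⁿ det x` and `det x ≠ 0`. An orthonormal basis
of the form `a₀, -J a₀, a₁, -J a₁, …` is built greedily (`exists_family`): a unit vector `w`
orthogonal to the vectors found so far has `J w` orthogonal to them as well, as their span is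
`J`-stable. If `V` has this basis as columns, then `V` is unitary and `Vᵀ x V = Σ_n`, so `U = V†`
works.
-/

open scoped Matrix

/-- The standard skew-symmetric form `Σ_n = 1_{n/2} ⊗ Y`, with `Y = [[0,1],[-1,0]]`:
`2×2` blocks `Y` along the diagonal. -/
noncomputable def stdSymplectic (n : ℕ) : Matrix (Fin n) (Fin n) ℂ :=
  Matrix.of fun i j =>
    if i.val % 2 = 0 ∧ j.val = i.val + 1 then 1
    else if j.val % 2 = 0 ∧ i.val = j.val + 1 then -1 else 0

/-- The antilinear map `v ↦ conj (x v)`, a quaternionic structure on `ℂⁿ` when `x` is unitary and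
skew-symmetric. -/
noncomputable def antiJ {n : ℕ} (x : Matrix (Fin n) (Fin n) ℂ) (v : Fin n → ℂ) : Fin n → ℂ :=
  star (x *ᵥ v)

section
variable {n : ℕ} {x : Matrix (Fin n) (Fin n) ℂ}

lemma antiJ_neg (v : Fin n → ℂ) : antiJ x (-v) = -antiJ x v := by
  simp [antiJ, Matrix.mulVec_neg]

lemma antiJ_antiJ (hx : x ∈ Matrix.unitaryGroup (Fin n) ℂ) (hskew : x = -xᵀ) (v : Fin n → ℂ) :
    antiJ x (antiJ x v) = -v := by
  have h1 : xᴴ * x = 1 := Matrix.mem_unitaryGroup_iff'.1 hx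
  have h2 : star (x *ᵥ star (x *ᵥ v)) = xᵀᴴ *ᵥ (x *ᵥ v) := by
    rw [Matrix.star_mulVec, star_star, ← Matrix.mulVec_transpose]
    rfl
  have h3 : xᵀᴴ = -xᴴ := by
    rw [← Matrix.conjTranspose_neg]
    congr 1
    rw [eq_neg_iff_add_eq_zero]
    nth_rewrite 2 [hskew]
    simp
  unfold antiJ
  rw [h2, h3, Matrix.neg_mulVec, Matrix.mulVec_mulVec, h1, Matrix.one_mulVec]

lemma inner_antiJ (hskew : x = -xᵀ) (a b : Fin n → ℂ) :
    star a ⬝ᵥ antiJ x b = -(star b ⬝ᵥ antiJ x a) := by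
  unfold antiJ
  rw [Matrix.star_dotProduct_star, Matrix.star_dotProduct_star, ← star_neg]
  congr 1
  rw [dotProduct_comm, Matrix.dotProduct_mulVec, ← Matrix.mulVec_transpose]
  nth_rewrite 2 [hskew]
  simp [Matrix.neg_mulVec, dotProduct_comm]

lemma inner_antiJ_self (hskew : x = -xᵀ) (a : Fin n → ℂ) : star a ⬝ᵥ antiJ x a = 0 :=
  self_eq_neg.1 (inner_antiJ hskew a a)

lemma antiJ_inner_antiJ (hx : x ∈ Matrix.unitaryGroup (Fin n) ℂ) (hskew : x = -xᵀ)
    (a b : Fin n → ℂ) : star (antiJ x a) ⬝ᵥ antiJ x b = star b ⬝ᵥ a := by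
  rw [inner_antiJ hskew, antiJ_antiJ hx hskew]
  simp

lemma inner_conj (a b : Fin n → ℂ) : star a ⬝ᵥ b = star (star b ⬝ᵥ a) := by
  rw [Matrix.star_dotProduct]

lemma exists_unit_orthogonal {k : ℕ} (hk : k < n) (v : ℕ → Fin n → ℂ) :
    ∃ w : Fin n → ℂ, star w ⬝ᵥ w = 1 ∧ ∀ i < k, star (v i) ⬝ᵥ w = 0 := by
  let M : Matrix (Fin k) (Fin n) ℂ := Matrix.of fun i => star (v i)
  have hker : LinearMap.ker M.mulVecLin ≠ ⊥ :=
    LinearMap.ker_ne_bot_of_finrank_lt (by simpa using hk)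
  obtain ⟨u, hu, hu0⟩ := (Submodule.ne_bot_iff _).1 hker
  have hu' : ∀ i < k, star (v i) ⬝ᵥ u = 0 := fun i hi =>
    congrFun (LinearMap.mem_ker.1 hu) ⟨i, hi⟩
  set r : ℝ := ∑ i, ‖u i‖ ^ 2 with hr
  have hur : star u ⬝ᵥ u = (r : ℂ) := by
    simp [dotProduct, hr, Complex.conj_mul']
  have hr0 : 0 < r := by
    obtain ⟨i, hi⟩ := Function.ne_iff.1 hu0
    exact Finset.sum_pos' (fun _ _ => by positivity)
      ⟨i, Finset.mem_univ _, by have : 0 < ‖u i‖ := norm_pos_iff.2 hi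
                                positivity⟩
  refine ⟨((Real.sqrt r)⁻¹ : ℂ) • u, ?_, fun i hi => by simp [hu' i hi]⟩
  have hs : ((Real.sqrt r : ℝ) : ℂ) * (Real.sqrt r : ℝ) = r := by
    rw [← Complex.ofReal_mul, Real.mul_self_sqrt hr0.le]
  have hs0 : ((Real.sqrt r : ℝ) : ℂ) ≠ 0 := by
    exact_mod_cast (Real.sqrt_pos.2 hr0).ne'
  rw [star_smul, smul_dotProduct, dotProduct_smul, hur, ← hs]
  simp only [smul_eq_mul, star_inv₀, Complex.star_def, Complex.conj_ofReal]
  field_simp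

/-- `J` permutes, up to sign, a family `a₀, -J a₀, a₁, -J a₁, …`. -/
lemma antiJ_family (hx : x ∈ Matrix.unitaryGroup (Fin n) ℂ) (hskew : x = -xᵀ) {k : ℕ}
    {v : ℕ → Fin n → ℂ} (hJ : ∀ i < k, v (2 * i + 1) = -antiJ x (v (2 * i)))
    {j : ℕ} (hj : j < 2 * k) :
    (j % 2 = 0 ∧ antiJ x (v j) = -v (j + 1)) ∨ (j % 2 = 1 ∧ antiJ x (v j) = v (j - 1)) := by
  obtain ⟨i, rfl | rfl⟩ := Nat.even_or_odd' j
  · left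
    refine ⟨by omega, ?_⟩
    rw [hJ i (by omega), neg_neg]
  · right
    refine ⟨by omega, ?_⟩
    rw [hJ i (by omega), antiJ_neg, antiJ_antiJ hx hskew, neg_neg]
    rfl

/-- Greedy construction of `2k` orthonormal vectors `a₀, -J a₀, a₁, -J a₁, …`. The family is
indexed by `ℕ`, with irrelevant values from index `2k` on. -/
lemma exists_family (hx : x ∈ Matrix.unitaryGroup (Fin n) ℂ) (hskew : x = -xᵀ) {m : ℕ}
    (hm : n = 2 * m) : ∀ k ≤ m, ∃ v : ℕ → Fin n → ℂ,
      (∀ i < k, v (2 * i + 1) = -antiJ x (v (2 * i))) ∧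
      ∀ i < 2 * k, ∀ j < 2 * k, star (v i) ⬝ᵥ v j = if i = j then 1 else 0 := by
  intro k
  induction k with
  | zero => exact fun _ => ⟨0, by simp, by simp⟩
  | succ k ih =>
    intro hk
    obtain ⟨v, hJ, ho⟩ := ih (by omega)
    obtain ⟨w, hw, hwv⟩ := exists_unit_orthogonal (k := 2 * k) (by omega) v
    have hvw : ∀ i < 2 * k, star w ⬝ᵥ v i = 0 := fun i hi => by
      rw [inner_conj, hwv i hi, star_zero]
    have hvJ : ∀ i < 2 * k, star (v i) ⬝ᵥ antiJ x w = 0 := fun i hi => by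
      rw [inner_antiJ hskew]
      rcases antiJ_family hx hskew hJ hi with ⟨h, e⟩ | ⟨h, e⟩
      · rw [e, dotProduct_neg, hvw _ (by omega)]; simp
      · rw [e, hvw _ (by omega)]; simp
    have hJv : ∀ i < 2 * k, star (antiJ x w) ⬝ᵥ v i = 0 := fun i hi => by
      rw [inner_conj, hvJ i hi, star_zero]
    have hwJ := inner_antiJ_self hskew w
    have hJw : star (antiJ x w) ⬝ᵥ w = 0 := by rw [inner_conj, hwJ, star_zero]
    have hJJ : star (antiJ x w) ⬝ᵥ antiJ x w = 1 := by rw [antiJ_inner_antiJ hx hskew, hw]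
    let v' : ℕ → Fin n → ℂ := fun i =>
      if i < 2 * k then v i else if i = 2 * k then w else -antiJ x w
    have e1 : ∀ i < 2 * k, v' i = v i := fun i hi => by simp [v', hi]
    have e2 : v' (2 * k) = w := by simp [v']
    have e3 : v' (2 * k + 1) = -antiJ x w := by simp [v']
    refine ⟨v', fun i hi => ?_, fun i hi j hj => ?_⟩
    · rcases Nat.lt_succ_iff_lt_or_eq.1 hi with h | rfl
      · rw [e1 _ (by omega), e1 _ (by omega), hJ i h]
      · rw [e2, e3]
    · have hi' : i < 2 * k ∨ i = 2 * k ∨ i = 2 * k + 1 := by omega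
      have hj' : j < 2 * k ∨ j = 2 * k ∨ j = 2 * k + 1 := by omega
      rcases hi' with h | rfl | rfl <;> rcases hj' with h' | rfl | rfl
      · rw [e1 i h, e1 j h', ho i h j h']
      · rw [e1 i h, e2, hwv i h, if_neg (by omega)]
      · rw [e1 i h, e3, dotProduct_neg, hvJ i h, if_neg (by omega), neg_zero]
      · rw [e1 j h', e2, hvw j h', if_neg (by omega)]
      · rw [e2, hw, if_pos rfl]
      · rw [e2, e3, dotProduct_neg, hwJ, if_neg (by omega), neg_zero]
      · rw [e1 j h', e3, star_neg, neg_dotProduct, hJv j h', if_neg (by omega), neg_zero]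
      · rw [e2, e3, star_neg, neg_dotProduct, hJw, if_neg (by omega), neg_zero]
      · rw [e3, star_neg, neg_dotProduct, dotProduct_neg, hJJ, if_pos rfl, neg_neg]

lemma even_of_skew (hx : x ∈ Matrix.unitaryGroup (Fin n) ℂ) (hskew : x = -xᵀ) : Even n := by
  by_contra h
  have h1 : xᴴ * x = 1 := Matrix.mem_unitaryGroup_iff'.1 hx
  have hdet : x.det = -x.det := by
    nth_rewrite 1 [hskew]
    rw [Matrix.det_neg, Matrix.det_transpose, Fintype.card_fin,
      (Nat.not_even_iff_odd.1 h).neg_one_pow, neg_one_mul]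
  have h0 : x.det = 0 := self_eq_neg.1 hdet
  have := congrArg Matrix.det h1
  simp [h0] at this

end

/-- A skew-symmetric unitary matrix `x = -xᵀ` has even size and can be written as
`x = Uᵀ Σ_n U` for a unitary `U`, where `Σ_n = 1_{n/2} ⊗ Y` is the standard
skew-symmetric form. -/
theorem stmt10 (n : ℕ) (x : Matrix (Fin n) (Fin n) ℂ)
    (hx : x ∈ Matrix.unitaryGroup (Fin n) ℂ)
    (hskew : x = -xᵀ) :
    Even n ∧ ∃ U ∈ Matrix.unitaryGroup (Fin n) ℂ, x = Uᵀ * stdSymplectic n * U := by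
  have hev := even_of_skew hx hskew
  refine ⟨hev, ?_⟩
  obtain ⟨m, hm⟩ := even_iff_exists_two_mul.1 hev
  obtain ⟨v, hJ, ho⟩ := exists_family hx hskew hm m le_rfl
  let V : Matrix (Fin n) (Fin n) ℂ := Matrix.of fun i j => v j i
  have hV : Vᴴ * V = 1 := by
    ext i j
    have := ho i (by omega) j (by omega)
    rw [Matrix.one_apply]
    simp only [Fin.ext_iff]
    rw [← this]
    rfl
  have hV' : V * Vᴴ = 1 := mul_eq_one_comm.1 hV
  have hS : Vᵀ * x * V = stdSymplectic n := by
    ext i j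
    have h1 : (Vᵀ * x * V) i j = star (star (v i) ⬝ᵥ antiJ x (v j)) := by
      rw [Matrix.mul_assoc, antiJ, ← Matrix.star_dotProduct_star, star_star, star_star,
        dotProduct_comm]
      rfl
    rw [h1]
    rcases antiJ_family hx hskew hJ (j := j) (by omega) with ⟨h, e⟩ | ⟨h, e⟩
    · rw [e, dotProduct_neg, ho i (by omega) (j + 1) (by omega)]
      have : ¬ (i.val % 2 = 0 ∧ j.val = i.val + 1) := by omega
      by_cases hij : i.val = j.val + 1 <;> simp [stdSymplectic, h, hij, this]
      omega
    · rw [e, ho i (by omega) (j - 1) (by omega)]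
      by_cases hij : i.val = j.val - 1
      · have : i.val % 2 = 0 ∧ j.val = i.val + 1 := by omega
        rw [if_pos hij, star_one, stdSymplectic, Matrix.of_apply, if_pos this]
      · have : ¬ (i.val % 2 = 0 ∧ j.val = i.val + 1) := by omega
        simp [stdSymplectic, h, hij, this]
  refine ⟨Vᴴ, Matrix.mem_unitaryGroup_iff.2 (by simpa [Matrix.star_eq_conjTranspose] using hV), ?_⟩
  have hT : Vᴴᵀ * Vᵀ = 1 := by rw [← Matrix.transpose_mul, hV', Matrix.transpose_one]
  calc x = (Vᴴᵀ * Vᵀ) * x * (V * Vᴴ) := by rw [hT, hV', one_mul, mul_one]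
    _ = Vᴴᵀ * (Vᵀ * x * V) * Vᴴ := by simp only [Matrix.mul_assoc]
    _ = _ := by rw [hS]
end
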